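/- arXiv:1012.3180 — 4 statements merged into one kernel-verified Lean document; each statement's English description precedes it below -/
import Mathlib

section
/- Let ∇ be an L-connection on an R-module M. For every p-form α of L (with values in R) and every M-valued q-form ω of L, the covariant exterior derivative satisfies the graded Leibniz rule d^∇(α ∧ ω) = d_Lα ∧ ω + (−1)^p α ∧ d^∇ω. -/
open scoped BigOperators

noncomputable section

/-- A Lie–Rinehart algebra structure on an `R`-module `L` with a `K`-Lie algebra bracket:
the `R`-linear anchor `a : L →ₗ[R] Der_K(R)` is a morphism of Lie algebras over `K` and
satisfies the Leibniz rule `⁅x, f • y⁆ = f • ⁅x, y⁆ + (a x f) • y`. -/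
structure IsLieRinehart {K R L : Type*} [CommRing K] [CommRing R] [Algebra K R]
    [LieRing L] [Module R L]
    (a : L →ₗ[R] Derivation K R R) : Prop where
  map_bracket : ∀ x y : L, a ⁅x, y⁆ = ⁅a x, a y⁆
  leibniz : ∀ (x y : L) (f : R), ⁅x, f • y⁆ = f • ⁅x, y⁆ + a x f • y

/-- The `k`-tuple `(⁅ξ i, ξ j⁆, ξ 0, …, ξ̂ i, …, ξ̂ j, …, ξ k)` obtained from a
`(k+1)`-tuple `ξ` by removing the entries at positions `i < j` and prepending the
bracket `⁅ξ i, ξ j⁆`. -/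
def braTuple {L : Type*} [LieRing L] {k : ℕ} (ξ : Fin (k + 1) → L)
    (i j : Fin (k + 1)) : Fin k → L := fun m =>
  if (m : ℕ) = 0 then ⁅ξ i, ξ j⁆
  else ξ ⟨if (m : ℕ) - 1 < (i : ℕ) then (m : ℕ) - 1
          else if (m : ℕ) < (j : ℕ) then (m : ℕ) else (m : ℕ) + 1,
        by have := m.isLt; split_ifs <;> omega⟩

/-- The raw (Lie–Rinehart/covariant exterior) differential of a
`k`-cochain with values in `N`, with respect to an operator `D : L → N → N`:
`(dω)(ξ₀,…,ξ_k) = Σᵢ (−1)ⁱ D (ξ i) (ω (…ξ̂ᵢ…)) + Σ_{i<j} (−1)^{i+j} ω (⁅ξᵢ,ξⱼ⁆, …ξ̂ᵢ…ξ̂ⱼ…)`. -/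
def covDRaw {L N : Type*} [LieRing L] [AddCommGroup N]
    (D : L → N → N) {k : ℕ} (ω : (Fin k → L) → N) : (Fin (k + 1) → L) → N := fun ξ =>
  (∑ i : Fin (k + 1), (-1 : ℤ) ^ (i : ℕ) • D (ξ i) (ω (ξ ∘ i.succAbove)))
    + ∑ i : Fin (k + 1), ∑ j : Fin (k + 1),
        if i < j then (-1 : ℤ) ^ ((i : ℕ) + (j : ℕ)) • ω (braTuple ξ i j) else 0

/-- The raw Lie–Rinehart differential `d_L` on `R`-valued cochains. -/
def dLRaw {K R L : Type*} [CommRing K] [CommRing R] [Algebra K R]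
    [LieRing L] [Module R L] (a : L →ₗ[R] Derivation K R R) {k : ℕ}
    (ω : (Fin k → L) → R) : (Fin (k + 1) → L) → R :=
  covDRaw (fun x f => a x f) ω

/-- An `L`-connection on an `R`-module `M` relative to the anchor `a`:
a `K`-bilinear map `D : L × M → M` with `D (f • x) m = f • D x m` and
`D x (f • m) = (a x f) • m + f • D x m`. -/
structure IsConnection {K R L M : Type*} [CommRing K] [CommRing R] [Algebra K R]
    [LieRing L] [Module R L] [Module K L]
    [AddCommGroup M] [Module R M] [Module K M]
    (a : L →ₗ[R] Derivation K R R) (D : L → M → M) : Prop where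
  add_left : ∀ (x y : L) (m : M), D (x + y) m = D x m + D y m
  add_right : ∀ (x : L) (m n : M), D x (m + n) = D x m + D x n
  smul_left_k : ∀ (c : K) (x : L) (m : M), D (c • x) m = c • D x m
  smul_right_k : ∀ (c : K) (x : L) (m : M), D x (c • m) = c • D x m
  smul_left : ∀ (f : R) (x : L) (m : M), D (f • x) m = f • D x m
  leibniz : ∀ (f : R) (x : L) (m : M), D x (f • m) = a x f • m + f • D x m

/-- The raw action of an `R`-valued `p`-cochain on an `M`-valued `q`-cochain:
`(α ∧ ω)(ξ) = (1/(p!·q!)) Σ_σ sign σ · α(ξ_{σ(1)},…,ξ_{σ(p)}) • ω(ξ_{σ(p+1)},…,ξ_{σ(p+q)})`. -/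
def wedgeRawSMul (K : Type*) {R L M : Type*} [Field K] [CommRing R] [Algebra K R]
    [AddCommGroup M] [Module R M] [Module K M] {p q : ℕ}
    (α : (Fin p → L) → R) (ω : (Fin q → L) → M) : (Fin (p + q) → L) → M := fun ξ =>
  (((p.factorial * q.factorial : ℕ) : K))⁻¹ •
    ∑ σ : Equiv.Perm (Fin (p + q)), (Equiv.Perm.sign σ : ℤ) •
      (α (fun i => ξ (σ (Fin.castAdd q i))) • ω (fun i => ξ (σ (Fin.natAdd p i))))

/-!
The connection `½ ⁅x, y⁆` on `L` has no torsion. Hence, if `Θ_x` denotes the covariant derivative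
`D x - ½ ad x` that it induces together with `D` on forms, the exterior derivative of `ω` is the
antisymmetrization of `(x, v) ↦ (Θ_x ω) v`, with no separate bracket term. Now `Θ_x` is a
derivation of the wedge product, and the antisymmetrization of `x ↦ α ∧ β_x` differs from the wedge
of `α` with that of `β` by the sign `(-1) ^ p` of moving `x` past the `p` arguments of `α`.
-/

open Equiv

section SignedSum

variable {X N P : Type*} [AddCommGroup N] [AddCommGroup P] {n : ℕ}

/-- The antisymmetrization of `f`, without the factor `1 / n!`. It is defined for arbitrary
functions because `v ↦ D (v 0) (ω (v 1, …, v n))` is not multilinear for a connection `D`. -/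
def signedSum (f : (Fin n → X) → N) (v : Fin n → X) : N :=
  ∑ σ : Perm (Fin n), (Perm.sign σ : ℤ) • f (v ∘ σ)

/-- The alternating sum `∑ i, (-1) ^ i • β (v i) (v 0, …, v̂ i, …, v n)`: the analogue of
`AlternatingMap.alternatizeUncurryFin` for functions that need not be multilinear. -/
def alternateUncurry (β : X → (Fin n → X) → N) (v : Fin (n + 1) → X) : N :=
  ∑ i : Fin (n + 1), (-1 : ℤ) ^ (i : ℕ) • β (v i) (v ∘ i.succAbove)

theorem signedSum_add (f g : (Fin n → X) → N) (v : Fin n → X) :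
    signedSum (f + g) v = signedSum f v + signedSum g v := by
  simp only [signedSum, Pi.add_apply, smul_add, Finset.sum_add_distrib]

theorem signedSum_comp_perm (f : (Fin n → X) → N) (e : Perm (Fin n)) (v : Fin n → X) :
    signedSum (fun w ↦ f (w ∘ e)) v = (Perm.sign e : ℤ) • signedSum f v := by
  have sign_cancel (σ : Perm (Fin n)) :
      (Perm.sign e : ℤ) * (Perm.sign (σ * e) : ℤ) = Perm.sign σ := by
    rw [← Units.val_mul, Perm.sign_mul, mul_comm (Perm.sign σ), ← mul_assoc, Int.units_mul_self,
      one_mul]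
  calc
    _ = ∑ σ : Perm (Fin n), (Perm.sign e : ℤ) • (Perm.sign (σ * e) : ℤ) • f (v ∘ ⇑(σ * e)) := by
      simp only [signedSum, smul_smul, sign_cancel, Perm.coe_mul, Function.comp_assoc]
    _ = (Perm.sign e : ℤ) • signedSum f v := by
      rw [← Finset.smul_sum, signedSum]
      exact congrArg _ (Equiv.sum_comp (Equiv.mulRight e) fun σ ↦ (Perm.sign σ : ℤ) • f (v ∘ σ))

theorem signedSum_comp_cast {m : ℕ} (h : n = m) (f : (Fin n → X) → N) (v : Fin m → X) :
    signedSum f (v ∘ Fin.cast h) = signedSum (fun w ↦ f (w ∘ Fin.cast h)) v := by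
  subst h
  rfl

theorem alternateUncurry_add (β γ : X → (Fin n → X) → N) (v : Fin (n + 1) → X) :
    alternateUncurry (β + γ) v = alternateUncurry β v + alternateUncurry γ v := by
  simp only [alternateUncurry, Pi.add_apply, smul_add, Finset.sum_add_distrib]

theorem alternateUncurry_smul {K : Type*} [Ring K] [Module K N] (c : K)
    (β : X → (Fin n → X) → N) (v : Fin (n + 1) → X) :
    alternateUncurry (c • β) v = c • alternateUncurry β v := by
  simp only [alternateUncurry, Pi.smul_apply, Finset.smul_sum, smul_comm c]

theorem bijective_cycleRange_symm_mul_decomposeFin_symm :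
    Function.Bijective fun x : Fin (n + 1) × Perm (Fin n) ↦
      (x.1.cycleRange.symm : Perm (Fin (n + 1))) * Perm.decomposeFin.symm (0, x.2) := by
  refine (Fintype.bijective_iff_injective_and_card _).2
    ⟨?_, (Fintype.card_congr Perm.decomposeFin).symm⟩
  rintro ⟨i, e⟩ ⟨j, g⟩ h
  obtain rfl : i = j := by simpa using DFunLike.congr_fun h 0
  simpa using mul_left_cancel h

theorem alternateUncurry_signedSum (f : X → (Fin n → X) → N) (v : Fin (n + 1) → X) :
    alternateUncurry (fun x ↦ signedSum (f x)) v =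
      signedSum (fun w ↦ f (w 0) (Fin.tail w)) v := by
  rw [signedSum, ← bijective_cycleRange_symm_mul_decomposeFin_symm.sum_comp,
    Fintype.sum_prod_type, alternateUncurry]
  refine Finset.sum_congr rfl fun i _ ↦ ?_
  rw [signedSum, Finset.smul_sum]
  refine Finset.sum_congr rfl fun e _ ↦ ?_
  have head : (i.cycleRange.symm * Perm.decomposeFin.symm (0, e) : Perm (Fin (n + 1))) 0 = i := by
    simp
  have tail : Fin.tail (v ∘ (i.cycleRange.symm * Perm.decomposeFin.symm (0, e) :
      Perm (Fin (n + 1)))) = (v ∘ i.succAbove) ∘ e := by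
    ext t
    simp [Fin.tail]
  rw [smul_smul, tail, Function.comp_apply, head]
  simp [Perm.sign_symm]

theorem alternateUncurry_eq_sum_comp_cycleRange_symm (β : X → (Fin n → X) → N) :
    alternateUncurry β = ∑ i : Fin (n + 1), (-1 : ℤ) ^ (i : ℕ) •
      fun v ↦ (fun w : Fin (n + 1) → X ↦ β (w 0) (Fin.tail w)) (v ∘ i.cycleRange.symm) := by
  ext v
  have tail (i : Fin (n + 1)) : Fin.tail (v ∘ i.cycleRange.symm) = v ∘ i.succAbove := by
    ext t
    simp [Fin.tail]
  simp [alternateUncurry, tail]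

theorem map_alternateUncurry_of_antisymmetric (Q : ((Fin (n + 1) → X) → N) →+ P)
    (hQ : ∀ g (e : Perm (Fin (n + 1))), Q (fun v ↦ g (v ∘ e)) = (Perm.sign e : ℤ) • Q g)
    (β : X → (Fin n → X) → N) :
    Q (alternateUncurry β) = (n + 1) • Q fun v ↦ β (v 0) (Fin.tail v) := by
  let u (v : Fin (n + 1) → X) : N := β (v 0) (Fin.tail v)
  calc
    Q (alternateUncurry β)
      = ∑ i : Fin (n + 1), (-1 : ℤ) ^ (i : ℕ) • Q fun v ↦ u (v ∘ i.cycleRange.symm) := by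
      rw [alternateUncurry_eq_sum_comp_cycleRange_symm, map_sum]
      simp only [map_zsmul, u]
    _ = ∑ _i : Fin (n + 1), Q u := by
      refine Finset.sum_congr rfl fun i _ ↦ ?_
      rw [hQ u, smul_smul]
      simp [Perm.sign_symm, ← mul_pow]
    _ = (n + 1) • Q u := by simp

end SignedSum

section OuterSMul

variable {X R M : Type*} [CommRing R] [AddCommGroup M] [Module R M] {p q : ℕ}

/-- The tensor product of a scalar cochain with a module-valued one, whose antisymmetrization is
the wedge product up to the factor `1 / (p! q!)`. -/
def outerSMul (α : (Fin p → X) → R) (ω : (Fin q → X) → M) (v : Fin (p + q) → X) : M :=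
  α (v ∘ Fin.castAdd q) • ω (v ∘ Fin.natAdd p)

theorem outerSMul_add_left (α β : (Fin p → X) → R) (ω : (Fin q → X) → M) :
    outerSMul (α + β) ω = outerSMul α ω + outerSMul β ω :=
  funext fun _ ↦ add_smul _ _ _

theorem outerSMul_add_right (α : (Fin p → X) → R) (ω η : (Fin q → X) → M) :
    outerSMul α (ω + η) = outerSMul α ω + outerSMul α η :=
  funext fun _ ↦ smul_add _ _ _

theorem signedSum_outerSMul_comp_perm (α : (Fin p → X) → R) (ω : (Fin q → X) → M)
    (e : Perm (Fin p)) (g : Perm (Fin q)) (v : Fin (p + q) → X) :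
    signedSum (outerSMul (fun w ↦ α (w ∘ e)) fun w ↦ ω (w ∘ g)) v =
      (Perm.sign e * Perm.sign g : ℤ) • signedSum (outerSMul α ω) v := by
  have sign_eq : Perm.sign (finSumFinEquiv.permCongr (Perm.sumCongr e g)) =
      Perm.sign e * Perm.sign g := by
    rw [Perm.sign_permCongr, Perm.sign_sumCongr]
  rw [← Units.val_mul, ← sign_eq, ← signedSum_comp_perm]
  refine congrArg (signedSum · v) (funext fun w ↦ ?_)
  simp only [outerSMul]
  congr! 2 <;> ext i <;> simp [Equiv.permCongr_apply]

theorem signedSum_outerSMul_alternateUncurry_left (β : X → (Fin p → X) → R)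
    (ω : (Fin q → X) → M) (v : Fin (p + 1 + q) → X) :
    signedSum (outerSMul (alternateUncurry β) ω) v =
      (p + 1) • signedSum (outerSMul (fun w ↦ β (w 0) (Fin.tail w)) ω) v := by
  let Q : ((Fin (p + 1) → X) → R) →+ M :=
    AddMonoidHom.mk' (fun g ↦ signedSum (outerSMul g ω) v) fun g h ↦ by
      rw [outerSMul_add_left, signedSum_add]
  refine map_alternateUncurry_of_antisymmetric Q (fun g e ↦ ?_) β
  simpa [Q] using signedSum_outerSMul_comp_perm g ω e 1 v

theorem signedSum_outerSMul_alternateUncurry_right (α : (Fin p → X) → R)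
    (β : X → (Fin q → X) → M) (v : Fin (p + (q + 1)) → X) :
    signedSum (outerSMul α (alternateUncurry β)) v =
      (q + 1) • signedSum (outerSMul α fun w ↦ β (w 0) (Fin.tail w)) v := by
  let Q : ((Fin (q + 1) → X) → M) →+ M :=
    AddMonoidHom.mk' (fun g ↦ signedSum (outerSMul α g) v) fun g h ↦ by
      rw [outerSMul_add_right, signedSum_add]
  refine map_alternateUncurry_of_antisymmetric Q (fun g e ↦ ?_) β
  simpa [Q] using signedSum_outerSMul_comp_perm α g 1 e v

theorem signedSum_outerSMul_tail_left (β : X → (Fin p → X) → R) (ω : (Fin q → X) → M)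
    (h : p + 1 + q = p + q + 1) (v : Fin (p + q + 1) → X) :
    signedSum (fun w ↦ outerSMul (β (w 0)) ω (Fin.tail w)) v =
      signedSum (outerSMul (fun w ↦ β (w 0) (Fin.tail w)) ω) (v ∘ Fin.cast h) := by
  have natAdd_succ (i : Fin q) : (Fin.natAdd p i).succ = Fin.cast h (Fin.natAdd (p + 1) i) := by
    ext
    simp only [Fin.val_succ, Fin.val_natAdd, Fin.val_cast]
    omega
  rw [signedSum_comp_cast]
  refine congrArg (signedSum · v) (funext fun w ↦ ?_)
  simp only [outerSMul]
  congr! 2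
  ext i
  exact congrArg w (natAdd_succ i)

theorem cycleRange_natAdd_zero_castAdd (i : Fin p) :
    (Fin.natAdd p (0 : Fin (q + 1))).cycleRange (Fin.castAdd (q + 1) i) =
      (Fin.castAdd q i).succ := by
  ext
  rw [Fin.coe_cycleRange_of_lt (by simp [Fin.lt_def])]
  simp

theorem cycleRange_natAdd_zero_natAdd_succ (i : Fin q) :
    (Fin.natAdd p (0 : Fin (q + 1))).cycleRange (Fin.natAdd p i.succ) =
      (Fin.natAdd p i).succ := by
  rw [Fin.cycleRange_of_gt (by simp [Fin.lt_def])]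
  rfl

theorem signedSum_outerSMul_tail_right (α : (Fin p → X) → R) (β : X → (Fin q → X) → M)
    (v : Fin (p + q + 1) → X) :
    signedSum (fun w ↦ outerSMul α (β (w 0)) (Fin.tail w)) v =
      (-1 : ℤ) ^ p • signedSum (n := p + (q + 1))
        (outerSMul α fun w ↦ β (w 0) (Fin.tail w)) v := by
  have sign_eq : (Perm.sign (Fin.natAdd p (0 : Fin (q + 1))).cycleRange : ℤ) = (-1) ^ p := by
    simp
  rw [← sign_eq, ← signedSum_comp_perm]
  refine congrArg (signedSum · v) (funext fun w ↦ ?_)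
  simp only [outerSMul]
  congr! 2
  · ext i
    simp [Fin.tail, cycleRange_natAdd_zero_castAdd]
  · simp
  · ext i
    simp [Fin.tail, cycleRange_natAdd_zero_natAdd_succ]

end OuterSMul

section Wedge

variable {K R L M : Type*} [Field K] [CommRing R] [Algebra K R] [AddCommGroup M] [Module R M]
  [Module K M] {p q : ℕ}

theorem wedgeRawSMul_apply (α : (Fin p → L) → R) (ω : (Fin q → L) → M) (v : Fin (p + q) → L) :
    wedgeRawSMul K α ω v =
      ((p.factorial * q.factorial : ℕ) : K)⁻¹ • signedSum (outerSMul α ω) v :=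
  rfl

theorem alternateUncurry_wedgeRawSMul_left [CharZero K] (β : L → (Fin p → L) → R)
    (ω : (Fin q → L) → M) (h : p + 1 + q = p + q + 1) (v : Fin (p + q + 1) → L) :
    alternateUncurry (fun x ↦ wedgeRawSMul K (β x) ω) v =
      wedgeRawSMul K (alternateUncurry β) ω (v ∘ Fin.cast h) := by
  have coeff : (((p + 1).factorial * q.factorial : ℕ) : K)⁻¹ * (p + 1 : ℕ) =
      ((p.factorial * q.factorial : ℕ) : K)⁻¹ := by
    have hp : ((p + 1 : ℕ) : K) ≠ 0 := Nat.cast_ne_zero.2 p.succ_ne_zero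
    rw [Nat.factorial_succ, mul_assoc, Nat.cast_mul, mul_inv_rev, inv_mul_cancel_right₀ hp]
  calc
    _ = ((p.factorial * q.factorial : ℕ) : K)⁻¹ •
          alternateUncurry (fun x ↦ signedSum (outerSMul (β x) ω)) v :=
      alternateUncurry_smul _ _ _
    _ = ((p.factorial * q.factorial : ℕ) : K)⁻¹ •
          signedSum (outerSMul (fun w ↦ β (w 0) (Fin.tail w)) ω) (v ∘ Fin.cast h) := by
      rw [alternateUncurry_signedSum fun x ↦ outerSMul (β x) ω, signedSum_outerSMul_tail_left]
    _ = _ := by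
      rw [wedgeRawSMul_apply, signedSum_outerSMul_alternateUncurry_left,
        ← Nat.cast_smul_eq_nsmul K, smul_smul, coeff]

theorem alternateUncurry_wedgeRawSMul_right [CharZero K] (α : (Fin p → L) → R)
    (β : L → (Fin q → L) → M) (v : Fin (p + q + 1) → L) :
    alternateUncurry (fun x ↦ wedgeRawSMul K α (β x)) v =
      (-1 : ℤ) ^ p • wedgeRawSMul K α (alternateUncurry β) v := by
  have coeff : ((p.factorial * (q + 1).factorial : ℕ) : K)⁻¹ * (q + 1 : ℕ) =
      ((p.factorial * q.factorial : ℕ) : K)⁻¹ := by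
    have hq : ((q + 1 : ℕ) : K) ≠ 0 := Nat.cast_ne_zero.2 q.succ_ne_zero
    rw [Nat.factorial_succ, mul_left_comm, Nat.cast_mul, mul_inv_rev, inv_mul_cancel_right₀ hq]
  calc
    _ = ((p.factorial * q.factorial : ℕ) : K)⁻¹ •
          alternateUncurry (fun x ↦ signedSum (outerSMul α (β x))) v :=
      alternateUncurry_smul _ _ _
    _ = ((p.factorial * q.factorial : ℕ) : K)⁻¹ • (-1 : ℤ) ^ p •
          signedSum (n := p + (q + 1)) (outerSMul α fun w ↦ β (w 0) (Fin.tail w)) v := by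
      rw [alternateUncurry_signedSum fun x ↦ outerSMul α (β x), signedSum_outerSMul_tail_right]
    _ = _ := by
      rw [wedgeRawSMul_apply, signedSum_outerSMul_alternateUncurry_right,
        ← Nat.cast_smul_eq_nsmul K, smul_smul, coeff, smul_comm]

variable [IsScalarTower K R M] {S : Type*} [CommRing S] [Algebra S R] [AddCommGroup L] [Module S L]
  [Module S M] [IsScalarTower S R M]

theorem exists_alternatingMap_eq_wedgeRawSMul (α : L [⋀^Fin p]→ₗ[S] R)
    (ω : L [⋀^Fin q]→ₗ[S] M) :
    ∃ W : L [⋀^Fin (p + q)]→ₗ[S] M, ⇑W = wedgeRawSMul K α ω := by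
  let smulMap : TensorProduct S R M →ₗ[S] M :=
    TensorProduct.lift (Algebra.lsmul S S M).toLinearMap
  let outer : MultilinearMap S (fun _ : Fin (p + q) ↦ L) M :=
    (smulMap.compMultilinearMap (α.toMultilinearMap.domCoprod ω.toMultilinearMap)).domDomCongr
      finSumFinEquiv
  refine ⟨algebraMap K R ((p.factorial * q.factorial : ℕ) : K)⁻¹ •
    MultilinearMap.alternatization outer, funext fun v ↦ ?_⟩
  rw [AlternatingMap.smul_apply, algebraMap_smul, MultilinearMap.alternatization_apply]
  rfl

end Wedge

section CartanSchouten

variable {L N : Type*} [LieRing L] [AddCommGroup N] {k : ℕ}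

/-- The derivation `f ↦ ∑ j, f (v 0, …, ⁅x, v j⁆, …, v (k - 1))` of cochains induced by `ad x`. -/
def adCochain (f : (Fin k → L) → N) (x : L) (v : Fin k → L) : N :=
  ∑ j, f (Function.update v j ⁅x, v j⁆)

/-- The covariant derivative of cochains induced by `D` on the coefficients and the
Cartan–Schouten connection `x, y ↦ ½ ⁅x, y⁆` on `L`. The latter has no torsion, which is why
antisymmetrizing this derivative gives the exterior derivative. -/
def cartanSchouten (K : Type*) [Field K] [Module K N] (D : L → N → N) (f : (Fin k → L) → N)
    (x : L) (v : Fin k → L) : N :=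
  D x (f v) - (2 : K)⁻¹ • adCochain f x v

theorem braTuple_succAbove_of_lt (v : Fin (k + 2) → L) {i : Fin (k + 2)} {j : Fin (k + 1)}
    (h : i < i.succAbove j) :
    braTuple v i (i.succAbove j) =
      Fin.cons ⁅v i, v (i.succAbove j)⁆ (j.removeNth (i.removeNth v)) := by
  have hij : (i : ℕ) ≤ j := Fin.lt_succAbove_iff_le_castSucc _ _ |>.1 h
  ext t
  cases t using Fin.cases with
  | zero => rfl
  | succ t =>
    rw [Fin.cons_succ, Fin.removeNth_apply, Fin.removeNth_apply, braTuple, if_neg (by simp)]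
    congr 1
    ext
    simp only [Fin.succAbove, Fin.lt_def, Fin.val_castSucc]
    split_ifs <;> simp_all <;> omega

theorem braTuple_succAbove_of_gt (v : Fin (k + 2) → L) {i : Fin (k + 2)} {j : Fin (k + 1)}
    (h : i.succAbove j < i) :
    braTuple v (i.succAbove j) i =
      Fin.cons ⁅v (i.succAbove j), v i⁆ (j.removeNth (i.removeNth v)) := by
  have hji : (j : ℕ) < i := Fin.succAbove_lt_iff_castSucc_lt _ _ |>.1 h
  ext t
  cases t using Fin.cases with
  | zero => rfl
  | succ t =>
    rw [Fin.cons_succ, Fin.removeNth_apply, Fin.removeNth_apply, braTuple, if_neg (by simp)]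
    congr 1
    ext
    simp only [Fin.succAbove, Fin.lt_def, Fin.val_castSucc]
    split_ifs <;> simp_all
    omega

variable {S : Type*} [CommRing S] [Module S L] [Module S N]

theorem alternatingMap_update_eq (f : L [⋀^Fin (k + 1)]→ₗ[S] N) (v : Fin (k + 1) → L)
    (j : Fin (k + 1)) (x : L) :
    f (Function.update v j x) = (-1 : ℤ) ^ (j : ℕ) • f (Fin.cons x (j.removeNth v)) := by
  rw [← Fin.insertNth_removeNth, f.map_insertNth]
  rfl

theorem alternatingMap_update_bracket_of_lt (f : L [⋀^Fin (k + 1)]→ₗ[S] N) (v : Fin (k + 2) → L)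
    {i : Fin (k + 2)} {j : Fin (k + 1)} (h : i < i.succAbove j) :
    (-1 : ℤ) ^ (i : ℕ) • f (Function.update (v ∘ i.succAbove) j ⁅v i, v (i.succAbove j)⁆) =
      -((-1 : ℤ) ^ ((i : ℕ) + i.succAbove j) • f (braTuple v i (i.succAbove j))) := by
  have val_eq : (i.succAbove j : ℕ) = j + 1 := by
    rw [Fin.succAbove_of_le_castSucc i j (Fin.lt_succAbove_iff_le_castSucc _ _ |>.1 h),
      Fin.val_succ]
  rw [alternatingMap_update_eq, braTuple_succAbove_of_lt v h, smul_smul, val_eq, ← neg_smul]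
  congr 1
  ring

theorem alternatingMap_update_bracket_of_gt (f : L [⋀^Fin (k + 1)]→ₗ[S] N) (v : Fin (k + 2) → L)
    {i : Fin (k + 2)} {j : Fin (k + 1)} (h : i.succAbove j < i) :
    (-1 : ℤ) ^ (i : ℕ) • f (Function.update (v ∘ i.succAbove) j ⁅v i, v (i.succAbove j)⁆) =
      -((-1 : ℤ) ^ ((i.succAbove j : ℕ) + i) • f (braTuple v (i.succAbove j) i)) := by
  have val_eq : (i.succAbove j : ℕ) = j := by
    rw [Fin.succAbove_of_castSucc_lt i j (Fin.succAbove_lt_iff_castSucc_lt _ _ |>.1 h),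
      Fin.val_castSucc]
  rw [← lie_skew, f.map_update_neg, alternatingMap_update_eq, braTuple_succAbove_of_gt v h,
    smul_neg, smul_smul, val_eq, ← pow_add, add_comm (i : ℕ)]
  rfl

theorem sum_sum_succAbove_eq_two_smul (t : Fin (k + 1) → Fin (k + 1) → N) :
    (∑ i, ∑ j : Fin k, if i < i.succAbove j then t i (i.succAbove j) else t (i.succAbove j) i) =
      2 • ∑ i, ∑ j, if i < j then t i j else 0 := by
  have row (i : Fin (k + 1)) :
      (∑ j : Fin k, if i < i.succAbove j then t i (i.succAbove j) else t (i.succAbove j) i) =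
        ∑ j, ((if i < j then t i j else 0) + if j < i then t j i else 0) := by
    rw [Fin.sum_univ_succAbove _ i]
    simp only [lt_irrefl, if_false, zero_add]
    refine Finset.sum_congr rfl fun j _ ↦ ?_
    rcases (Fin.succAbove_ne i j).lt_or_gt with h | h <;> simp [h, h.not_gt]
  simp only [row, Finset.sum_add_distrib]
  rw [two_nsmul, Finset.sum_comm (f := fun i j ↦ if j < i then t j i else 0)]

theorem alternateUncurry_adCochain (f : L [⋀^Fin k]→ₗ[S] N) (v : Fin (k + 1) → L) :
    alternateUncurry (adCochain f) v = -(2 • ∑ i : Fin (k + 1), ∑ j : Fin (k + 1),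
      if i < j then (-1 : ℤ) ^ ((i : ℕ) + j) • f (braTuple v i j) else 0) := by
  rw [← sum_sum_succAbove_eq_two_smul]
  simp only [alternateUncurry, adCochain, Finset.smul_sum, ← Finset.sum_neg_distrib]
  refine Finset.sum_congr rfl fun i _ ↦ Finset.sum_congr rfl fun j _ ↦ ?_
  obtain ⟨k, rfl⟩ : ∃ m, k = m + 1 := Nat.exists_eq_add_one.2 j.pos
  split_ifs with h
  · exact alternatingMap_update_bracket_of_lt f v h
  · exact alternatingMap_update_bracket_of_gt f v
      ((Fin.succAbove_ne i j).lt_of_le (not_lt.1 h))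

variable {K : Type*} [Field K] [Module K N]

theorem covDRaw_eq_alternateUncurry_cartanSchouten [CharZero K] (D : L → N → N)
    (f : L [⋀^Fin k]→ₗ[S] N) (v : Fin (k + 1) → L) :
    covDRaw D f v = alternateUncurry (cartanSchouten K D f) v := by
  have split : cartanSchouten K D f = (fun x w ↦ D x (f w)) + (-(2 : K)⁻¹) • adCochain f := by
    ext x w
    simp [cartanSchouten, sub_eq_add_neg]
  rw [split, alternateUncurry_add, alternateUncurry_smul, alternateUncurry_adCochain, smul_neg,
    neg_smul, neg_neg, ← Nat.cast_smul_eq_nsmul K, smul_smul, Nat.cast_ofNat,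
    inv_mul_cancel₀ two_ne_zero, one_smul]
  rfl

theorem adCochain_signedSum (f : (Fin k → L) → N) (x : L) (v : Fin k → L) :
    adCochain (signedSum f) x v = signedSum (adCochain f x) v := by
  simp only [adCochain, signedSum, Finset.smul_sum]
  rw [Finset.sum_comm]
  refine Finset.sum_congr rfl fun σ _ ↦ ?_
  rw [← Equiv.sum_comp σ]
  simp only [Function.update_comp_eq_of_injective _ σ.injective, Function.comp_apply]

theorem cartanSchouten_signedSum {D : L → N → N} (hD : ∀ x m n, D x (m + n) = D x m + D x n)
    (f : (Fin k → L) → N) (x : L) (v : Fin k → L) :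
    cartanSchouten K D (signedSum f) x v = signedSum (cartanSchouten K D f x) v := by
  have map_signedSum : D x (signedSum f v) = signedSum (fun w ↦ D x (f w)) v := by
    let Dx : N →+ N := AddMonoidHom.mk' (D x) (hD x)
    change Dx (signedSum f v) = signedSum (fun w ↦ Dx (f w)) v
    simp only [signedSum, map_sum, map_zsmul]
  rw [cartanSchouten, map_signedSum, adCochain_signedSum]
  simp only [signedSum, cartanSchouten, smul_sub, Finset.sum_sub_distrib, Finset.smul_sum,
    smul_comm (2 : K)⁻¹]

theorem cartanSchouten_smul {D : L → N → N} {c : K} (hD : ∀ x m, D x (c • m) = c • D x m)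
    (f : (Fin k → L) → N) (x : L) (v : Fin k → L) :
    cartanSchouten K D (c • f) x v = c • cartanSchouten K D f x v := by
  simp only [cartanSchouten, adCochain, Pi.smul_apply, hD, ← Finset.smul_sum, smul_sub,
    smul_comm c]

end CartanSchouten

section Leibniz

variable {K R L M : Type*} [Field K] [CommRing R] [Algebra K R] [LieRing L] [AddCommGroup M]
  [Module R M] {p q : ℕ}

theorem adCochain_outerSMul (α : (Fin p → L) → R) (ω : (Fin q → L) → M) (x : L)
    (v : Fin (p + q) → L) :
    adCochain (outerSMul α ω) x v =
      outerSMul (adCochain α x) ω v + outerSMul α (adCochain ω x) v := by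
  have castAdd_ne_natAdd (i : Fin p) (j : Fin q) : Fin.castAdd q i ≠ Fin.natAdd p j :=
    Fin.ne_of_lt (by simp only [Fin.lt_def, Fin.val_castAdd, Fin.val_natAdd]; omega)
  have update_castAdd (i : Fin p) (y : L) :
      Function.update v (Fin.castAdd q i) y ∘ Fin.natAdd p = v ∘ Fin.natAdd p := by
    ext j
    exact Function.update_of_ne (castAdd_ne_natAdd i j).symm y v
  have update_natAdd (j : Fin q) (y : L) :
      Function.update v (Fin.natAdd p j) y ∘ Fin.castAdd q = v ∘ Fin.castAdd q := by
    ext i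
    exact Function.update_of_ne (castAdd_ne_natAdd i j) y v
  simp only [adCochain, outerSMul, Fin.sum_univ_add, update_castAdd, update_natAdd,
    Function.update_comp_eq_of_injective _ (Fin.castAdd_injective p q),
    Function.update_comp_eq_of_injective _ (Fin.natAdd_injective q p), Finset.sum_smul,
    Finset.smul_sum, Function.comp_apply]

variable [Module K M] [IsScalarTower K R M]

theorem cartanSchouten_outerSMul {d : L → R → R} {D : L → M → M}
    (leibniz : ∀ x f m, D x (f • m) = d x f • m + f • D x m)
    (α : (Fin p → L) → R) (ω : (Fin q → L) → M) (x : L) (v : Fin (p + q) → L) :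
    cartanSchouten K D (outerSMul α ω) x v =
      outerSMul (cartanSchouten K d α x) ω v + outerSMul α (cartanSchouten K D ω x) v := by
  rw [cartanSchouten, adCochain_outerSMul]
  simp only [outerSMul, cartanSchouten, leibniz, sub_smul, smul_sub, smul_add, smul_assoc,
    smul_comm (2 : K)⁻¹ (α _)]
  abel

theorem map_smul_of_leibniz {δ : Derivation K R R} {E : M → M}
    (leibniz : ∀ (f : R) m, E (f • m) = δ f • m + f • E m) (c : K) (m : M) :
    E (c • m) = c • E m := by
  rw [← algebraMap_smul R c m, leibniz, δ.map_algebraMap, zero_smul, zero_add, algebraMap_smul]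

theorem cartanSchouten_wedgeRawSMul {a : L → Derivation K R R} {D : L → M → M}
    (map_add : ∀ x m n, D x (m + n) = D x m + D x n)
    (leibniz : ∀ x f m, D x (f • m) = a x f • m + f • D x m)
    (α : (Fin p → L) → R) (ω : (Fin q → L) → M) (x : L) (v : Fin (p + q) → L) :
    cartanSchouten K D (wedgeRawSMul K α ω) x v =
      wedgeRawSMul K (cartanSchouten K (fun y f ↦ a y f) α x) ω v +
        wedgeRawSMul K α (cartanSchouten K D ω x) v := by
  simp only [wedgeRawSMul_apply, ← smul_add, ← signedSum_add]
  have outer : cartanSchouten K D (outerSMul α ω) x =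
      outerSMul (cartanSchouten K (fun y f ↦ a y f) α x) ω +
        outerSMul α (cartanSchouten K D ω x) :=
    funext (cartanSchouten_outerSMul leibniz α ω x)
  rw [← outer, ← cartanSchouten_signedSum map_add]
  exact cartanSchouten_smul (fun y ↦ map_smul_of_leibniz (leibniz y) _) _ x v

end Leibniz

theorem lieRinehart_covariant_derivative_graded_leibniz_general
    {K R L M S : Type*} [Field K] [CharZero K] [CommRing R] [Algebra K R] [LieRing L]
    [AddCommGroup M] [Module R M] [Module K M] [IsScalarTower K R M] [CommRing S] [Algebra S R]
    [Module S L] [Module S M] [IsScalarTower S R M]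
    {a : L → Derivation K R R} {D : L → M → M} (map_add : ∀ x m n, D x (m + n) = D x m + D x n)
    (leibniz : ∀ x f m, D x (f • m) = a x f • m + f • D x m)
    {p q : ℕ} (α : L [⋀^Fin p]→ₗ[S] R) (ω : L [⋀^Fin q]→ₗ[S] M) (h : p + 1 + q = p + q + 1)
    (ξ : Fin (p + q + 1) → L) :
    covDRaw D (wedgeRawSMul K α ω) ξ =
      wedgeRawSMul K (covDRaw (fun x f ↦ a x f) α) ω (ξ ∘ Fin.cast h) +
        (-1 : ℤ) ^ p • wedgeRawSMul K α (covDRaw D ω) ξ := by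
  let dα := cartanSchouten K (fun y f ↦ a y f) α
  let dω := cartanSchouten K D ω
  obtain ⟨W, hW⟩ := exists_alternatingMap_eq_wedgeRawSMul (K := K) α ω
  calc
    covDRaw D (wedgeRawSMul K α ω) ξ
      = alternateUncurry (cartanSchouten K D (wedgeRawSMul K α ω)) ξ := by
      rw [← hW, covDRaw_eq_alternateUncurry_cartanSchouten (K := K)]
    _ = alternateUncurry ((fun x ↦ wedgeRawSMul K (dα x) ω) +
          fun x ↦ wedgeRawSMul K α (dω x)) ξ := by
      congr 1
      ext x v
      exact cartanSchouten_wedgeRawSMul map_add leibniz α ω x v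
    _ = wedgeRawSMul K (alternateUncurry dα) ω (ξ ∘ Fin.cast h) +
          (-1 : ℤ) ^ p • wedgeRawSMul K α (alternateUncurry dω) ξ := by
      rw [alternateUncurry_add, alternateUncurry_wedgeRawSMul_left dα,
        alternateUncurry_wedgeRawSMul_right]
    _ = _ := by
      rw [← funext (covDRaw_eq_alternateUncurry_cartanSchouten (K := K) (fun y f ↦ a y f) α),
        ← funext (covDRaw_eq_alternateUncurry_cartanSchouten (K := K) D ω)]

/-- For an `L`-connection `∇` on `M`, every `p`-form `α` of `L` and every `M`-valued
`q`-form `ω` of `L`, the covariant exterior derivative satisfies the graded Leibniz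
rule `d^∇(α ∧ ω) = d_L α ∧ ω + (−1)^p α ∧ d^∇ ω`. -/
theorem lieRinehart_covariant_derivative_graded_leibniz
    {K R L M : Type*} [Field K] [CharZero K] [CommRing R] [Algebra K R]
    [LieRing L] [Module R L] [Module K L] [IsScalarTower K R L] [LieAlgebra K L]
    [AddCommGroup M] [Module R M] [Module K M] [IsScalarTower K R M]
    (a : L →ₗ[R] Derivation K R R) (ha : IsLieRinehart a)
    (D : L → M → M) (hD : IsConnection a D)
    (p q : ℕ) (α : AlternatingMap R L R (Fin p)) (ω : AlternatingMap R L M (Fin q)) :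
    ∀ ξ : Fin (p + q + 1) → L,
      covDRaw D (wedgeRawSMul K ⇑α ⇑ω) ξ
        = wedgeRawSMul K (dLRaw a ⇑α) ⇑ω
            (fun i => ξ (Fin.cast (show p + 1 + q = p + q + 1 by omega) i))
          + (-1 : ℤ) ^ p • wedgeRawSMul K ⇑α (covDRaw D ⇑ω) ξ := by
  exact lieRinehart_covariant_derivative_graded_leibniz_general hD.add_right
    (fun x f m ↦ hD.leibniz f x m) α ω _
end
end

section
/- Let ∇ be an L-connection on an R-module M and ∇^{End} the induced L-connection on End_R(M). For every End_R(M)-valued p-form ω and q-form τ of L, the covariant exterior derivative satisfies d^{∇^{End}}[ω, τ] = [d^{∇^{End}}ω, τ] + (−1)^p [ω, d^{∇^{End}}τ]. -/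
open scoped BigOperators

noncomputable section

/-- The induced operator `∇^End_x T = ∇ₓ ∘ T − T ∘ ∇ₓ` on maps `M → M`. -/
def endCommRaw {L M : Type*} [AddCommGroup M] (D : L → M → M) :
    L → (M → M) → (M → M) := fun x T m => D x (T m) - T (D x m)

/-- The raw graded bracket of two `End`-valued cochains (values as maps `M → M`):
`[ω, τ](ξ) = (1/(p!·q!)) Σ_σ sign σ · ⁅ω(ξ_{σ(1)},…,ξ_{σ(p)}), τ(ξ_{σ(p+1)},…,ξ_{σ(p+q)})⁆`,
using the commutator bracket. -/
def brWedgeRaw (K : Type*) {L M : Type*} [Field K] [AddCommGroup M] [Module K M]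
    {p q : ℕ} (ω : (Fin p → L) → (M → M)) (τ : (Fin q → L) → (M → M)) :
    (Fin (p + q) → L) → (M → M) := fun ξ =>
  (((p.factorial * q.factorial : ℕ) : K))⁻¹ •
    ∑ σ : Equiv.Perm (Fin (p + q)), (Equiv.Perm.sign σ : ℤ) •
      (fun m =>
        ω (fun i => ξ (σ (Fin.castAdd q i))) (τ (fun i => ξ (σ (Fin.natAdd p i))) m)
          - τ (fun i => ξ (σ (Fin.natAdd p i)))
              (ω (fun i => ξ (σ (Fin.castAdd q i))) m))

/-!
Write `Alt F ξ = ∑ σ, sign σ • F (ξ ∘ σ)`, so that a `k`-form is `(k!)⁻¹ • Alt ω` and the bracket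
of forms is `(p! q!)⁻¹ • Alt (ω ⊗ τ)`. Sorting permutations by the arguments they put first gives
`d (Alt F) = Alt (δ F)`, where
`δ F v = D (v 0) (F (v 1, …, v k)) - 1/2 * ∑ s, (-1)^s F (v 2, …, ⁅v 0, v 1⁆, …, v k)`
with the bracket in slot `s`. For `F = ω ⊗ τ` both parts of `δ` split: the first by the product rule
of the connection, the second according to whether `s` is a slot of `ω` or of `τ`. Up to a
permutation of the arguments this gives `δ ω ⊗ τ` and `(-1)^p ω ⊗ δ τ`; the sign comes in the first
part from moving one argument past the block of `ω`, in the second from the numbering of the slots.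
The identity `Alt (Alt F ⊗ G) = p! Alt (F ⊗ G)` then absorbs the factorials. For endomorphisms the
product rule is the Jacobi identity of the commutator.
-/

open Equiv (Perm)

section Permutations

variable {n : ℕ} {A : Type*}

theorem inv_decomposeFin_symm_zero (σ : Perm (Fin n)) :
    (Perm.decomposeFin.symm (0, σ))⁻¹ = Perm.decomposeFin.symm (0, σ⁻¹) := by
  rw [inv_eq_iff_mul_eq_one]
  ext i
  cases i using Fin.cases <;> simp

theorem sum_perm_fin_succ [AddCommMonoid A] (f : Perm (Fin (n + 1)) → A) :
    ∑ π, f π = ∑ i : Fin (n + 1), ∑ σ : Perm (Fin n),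
      f (i.cycleRange.symm * Perm.decomposeFin.symm (0, σ)) := by
  let e : Fin (n + 1) × Perm (Fin n) → Perm (Fin (n + 1)) :=
    fun x => x.1.cycleRange.symm * Perm.decomposeFin.symm (0, x.2)
  have e_injective : Function.Injective e := by
    rintro ⟨i, σ⟩ ⟨j, τ⟩ h
    obtain rfl : i = j := by simpa [e] using Equiv.congr_fun h 0
    simpa [e] using h
  have e_bijective : Function.Bijective e :=
    (Fintype.bijective_iff_injective_and_card e).2
      ⟨e_injective, by simp [Fintype.card_perm, Nat.factorial_succ]⟩
  rw [← e_bijective.sum_comp, Fintype.sum_prod_type]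

theorem sum_perm_fin_succ_inv [AddCommMonoid A] (f : Perm (Fin (n + 1)) → A) :
    ∑ π, f π = ∑ i : Fin (n + 1), ∑ σ : Perm (Fin n),
      f (Perm.decomposeFin.symm (0, σ) * i.cycleRange) := by
  rw [← Equiv.sum_comp (Equiv.inv _), sum_perm_fin_succ]
  refine Finset.sum_congr rfl fun i _ => ?_
  rw [← Equiv.sum_comp (Equiv.inv _)]
  refine Finset.sum_congr rfl fun σ _ => congrArg f ?_
  simp only [Equiv.inv_apply, mul_inv_rev, inv_decomposeFin_symm_zero, inv_inv]
  rfl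

theorem val_succAbove_of_lt {i : Fin (n + 1)} {j : Fin n} (h : i.succAbove j < i) :
    (i.succAbove j : ℕ) = j := by
  rw [Fin.succAbove_of_castSucc_lt _ _ ((Fin.succAbove_lt_iff_castSucc_lt _ _).1 h)]
  rfl

theorem val_succAbove_of_gt {i : Fin (n + 1)} {j : Fin n} (h : i < i.succAbove j) :
    (i.succAbove j : ℕ) = j + 1 := by
  rw [Fin.succAbove_of_lt_succ _ _ ((Fin.lt_succAbove_iff_lt_castSucc _ _).1 h)]
  rfl

theorem sum_neg_one_pow_smul_succAbove [AddCommGroup A] (g : Fin (n + 1) → Fin (n + 1) → A) :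
    ∑ i : Fin (n + 1), ∑ j : Fin n, (-1 : ℤ) ^ (i + j : ℕ) • g i (i.succAbove j) =
      ∑ i : Fin (n + 1), ∑ j : Fin (n + 1),
        if i < j then (-1 : ℤ) ^ (i + j : ℕ) • (g j i - g i j) else 0 := by
  let below (i l : Fin (n + 1)) : A := if l < i then (-1 : ℤ) ^ (i + l : ℕ) • g i l else 0
  let above (i l : Fin (n + 1)) : A := if i < l then (-1 : ℤ) ^ (i + l : ℕ) • g i l else 0
  have term_eq (i : Fin (n + 1)) (j : Fin n) : (-1 : ℤ) ^ (i + j : ℕ) • g i (i.succAbove j) =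
      below i (i.succAbove j) - above i (i.succAbove j) := by
    rcases lt_or_gt_of_ne (Fin.succAbove_ne i j) with h | h
    · simp [below, above, h, h.not_gt, val_succAbove_of_lt h]
    · simp [below, above, h, h.not_gt, val_succAbove_of_gt h, pow_add]
  have row_eq (i : Fin (n + 1)) : ∑ j : Fin n, (-1 : ℤ) ^ (i + j : ℕ) • g i (i.succAbove j) =
      ∑ l, (below i l - above i l) := by
    simp [Fin.sum_univ_succAbove _ i, term_eq, below, above]
  simp only [row_eq, Finset.sum_sub_distrib]
  rw [Finset.sum_comm, ← Finset.sum_sub_distrib]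
  refine Finset.sum_congr rfl fun i _ => ?_
  rw [← Finset.sum_sub_distrib]
  refine Finset.sum_congr rfl fun j _ => ?_
  simp only [below, above, add_comm (j : ℕ)]
  split_ifs <;> simp [smul_sub]

theorem sign_smul_sign_smul {ι : Type*} [Fintype ι] [DecidableEq ι] [AddCommGroup A]
    (σ : Perm ι) (a : A) : (Perm.sign σ : ℤ) • (Perm.sign σ : ℤ) • a = a := by
  rw [smul_smul, ← Units.val_mul, Int.units_mul_self, Units.val_one, one_smul]

theorem castAdd_lt_natAdd {p q : ℕ} (i : Fin p) (j : Fin q) :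
    Fin.castAdd q i < Fin.natAdd p j :=
  i.isLt.trans_le (Nat.le_add_right p j)

theorem val_cycleRange (s i : Fin n) : (s.cycleRange i : ℕ) =
    if i < s then (i : ℕ) + 1 else if i = s then 0 else (i : ℕ) := by
  have : NeZero n := ⟨i.pos.ne'⟩
  split_ifs with hlt heq
  · exact Fin.coe_cycleRange_of_lt hlt
  · simp [heq]
  · rw [Fin.cycleRange_of_gt (by grind)]

/-- The permutation of `p + q + 1` positions for which `v ∘ pairPastBlock p q` is
`(v 2, …, v (p + 1), v 0, v 1, v (p + 2), …)`. It carries the first two arguments past a block of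
`p` arguments; for `q = 0` there is no room for the pair and the value is `1`. -/
def pairPastBlock (p q : ℕ) : Perm (Fin (p + (q + 1))) :=
  (Fin.ofNat (p + (q + 1)) (p + 1)).cycleRange ^ 2

theorem sign_pairPastBlock (p q : ℕ) : Perm.sign (pairPastBlock p q) = 1 := by
  rw [pairPastBlock, map_pow, Int.units_sq]

theorem val_pairPastBlock {p q : ℕ} (hq : 0 < q) (i : Fin (p + (q + 1))) :
    (pairPastBlock p q i : ℕ) =
      if (i : ℕ) < p then (i : ℕ) + 2 else if (i : ℕ) < p + 2 then (i : ℕ) - p else i := by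
  have val_ofNat : (Fin.ofNat (p + (q + 1)) (p + 1) : ℕ) = p + 1 := Nat.mod_eq_of_lt (by omega)
  simp only [pairPastBlock, sq, Perm.mul_apply, val_cycleRange, Fin.lt_def, Fin.ext_iff, val_ofNat]
  grind

end Permutations

section Antisymmetrization

/-- The unnormalised antisymmetrisation `ξ ↦ ∑ σ, sign σ • F (ξ ∘ σ)` of a cochain. It is defined
on arbitrary functions because the integrands of the exterior derivative are neither alternating
nor multilinear over the ring of functions. -/
def antisymmetrize (K : Type*) {ι L A : Type*} [CommRing K] [Fintype ι] [DecidableEq ι]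
    [AddCommGroup A] [Module K A] : ((ι → L) → A) →ₗ[K] ((ι → L) → A) :=
  ∑ σ : Perm ι, (Perm.sign σ : ℤ) • LinearMap.funLeft K A (fun ξ : ι → L => ξ ∘ σ)

variable {K ι κ L A : Type*} [CommRing K] [Fintype ι] [DecidableEq ι] [Fintype κ] [DecidableEq κ]
  [AddCommGroup A] [Module K A]

theorem antisymmetrize_apply (F : (ι → L) → A) (ξ : ι → L) :
    antisymmetrize K F ξ = ∑ σ : Perm ι, (Perm.sign σ : ℤ) • F (ξ ∘ σ) := by
  simp [antisymmetrize, LinearMap.funLeft_apply]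

theorem antisymmetrize_eq_sum (F : (ι → L) → A) :
    antisymmetrize K F = ∑ σ : Perm ι, (Perm.sign σ : ℤ) • fun v => F (v ∘ σ) := by
  ext ξ
  simp [antisymmetrize_apply]

theorem antisymmetrize_comp_perm (F : (ι → L) → A) (ρ : Perm ι) :
    antisymmetrize K (fun v => F (v ∘ ρ)) = (Perm.sign ρ : ℤ) • antisymmetrize K F := by
  funext ξ
  simp only [Pi.smul_apply, antisymmetrize_apply, Finset.smul_sum]
  rw [← Equiv.sum_comp (Equiv.mulRight ρ)
    fun σ => (Perm.sign ρ : ℤ) • (Perm.sign σ : ℤ) • F (ξ ∘ σ)]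
  refine Finset.sum_congr rfl fun σ _ => ?_
  have sign_eq : (Perm.sign ρ : ℤ) * Perm.sign (σ * ρ) = Perm.sign σ := by
    rw [Perm.sign_mul, mul_comm (Perm.sign σ), ← Units.val_mul, ← mul_assoc, Int.units_mul_self,
      one_mul]
  rw [Equiv.coe_mulRight, smul_smul, sign_eq, Perm.coe_mul, Function.comp_assoc]

theorem antisymmetrize_comp_equiv (F : (κ → L) → A) (e : κ ≃ ι) (ξ : ι → L) :
    antisymmetrize K F (ξ ∘ e) = antisymmetrize K (fun v => F (v ∘ e)) ξ := by
  simp only [antisymmetrize_apply]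
  rw [← Equiv.sum_comp e.permCongr]
  refine Finset.sum_congr rfl fun σ _ => ?_
  rw [Perm.sign_permCongr]
  congr 2
  ext i
  simp [Equiv.permCongr_apply]

theorem antisymmetrize_alternatingMap [AddCommGroup L] (ω : L [⋀^ι]→ₗ[ℤ] A) :
    antisymmetrize K ω = ((Fintype.card ι).factorial : K) • ⇑ω := by
  funext ξ
  have term_eq (σ : Perm ι) : (Perm.sign σ : ℤ) • ω (ξ ∘ σ) = ω ξ := by
    rw [ω.map_perm, Units.smul_def, sign_smul_sign_smul]
  simp [antisymmetrize_apply, term_eq, Fintype.card_perm, Nat.cast_smul_eq_nsmul]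

theorem antisymmetrize_eq_sum_removeNth {n : ℕ} (F : (Fin (n + 1) → L) → A)
    (ξ : Fin (n + 1) → L) :
    antisymmetrize K F ξ = ∑ i : Fin (n + 1), (-1 : ℤ) ^ (i : ℕ) •
      antisymmetrize K (fun u => F (Fin.cons (ξ i) u)) (ξ ∘ i.succAbove) := by
  simp only [antisymmetrize_apply, sum_perm_fin_succ, Finset.smul_sum]
  refine Finset.sum_congr rfl fun i _ => Finset.sum_congr rfl fun σ _ => ?_
  rw [smul_smul]
  congr 2
  · simp [Perm.sign_mul]
  · ext m
    cases m using Fin.cases <;> simp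

theorem antisymmetrize_cons {n : ℕ} (F : (Fin (n + 1) → L) → A) (x : L) (u : Fin n → L) :
    antisymmetrize K F (Fin.cons x u) = ∑ s : Fin (n + 1), (-1 : ℤ) ^ (s : ℕ) •
      antisymmetrize K (fun w => F (s.insertNth x w)) u := by
  simp only [antisymmetrize_apply, sum_perm_fin_succ_inv, Finset.smul_sum]
  refine Finset.sum_congr rfl fun s _ => Finset.sum_congr rfl fun σ _ => ?_
  have cons_comp : (Fin.cons x u : Fin (n + 1) → L) ∘ Perm.decomposeFin.symm (0, σ) =
      Fin.cons x (u ∘ σ) := by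
    ext m
    cases m using Fin.cases <;> simp
  rw [Perm.coe_mul, ← Function.comp_assoc, cons_comp, Fin.cons_comp_cycleRange, smul_smul]
  simp [Perm.sign_mul, mul_comm]

end Antisymmetrization

section BracketTuples

variable {L : Type*} [LieRing L] {k n : ℕ}

/-- The `k`-tuple obtained from `(v 2, …, v k)` by inserting `⁅v 0, v 1⁆` at position `s`. -/
def bracketAt (s : Fin k) (v : Fin (k + 1) → L) : Fin k → L := fun i =>
  if i = s then ⁅v 0, v 1⁆
  else v ⟨if i < s then (i : ℕ) + 2 else i + 1, by split_ifs <;> omega⟩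

theorem bracketAt_eq_insertNth (s : Fin (n + 1)) (v : Fin (n + 2) → L) :
    bracketAt s v = s.insertNth ⁅v 0, v 1⁆ (fun m => v m.succ.succ) := by
  ext i
  induction i using s.succAboveCases with
  | x => simp [bracketAt]
  | p m =>
    simp only [bracketAt, Fin.succAbove_ne, if_false, Fin.insertNth_apply_succAbove]
    congr 1
    ext
    simp only [Fin.succAbove, Fin.lt_def, Fin.val_succ]
    grind

theorem braTuple_eq_cons (ξ : Fin (n + 2) → L) (i j : Fin (n + 2)) :
    braTuple ξ i j = Fin.cons ⁅ξ i, ξ j⁆ (Fin.tail (braTuple ξ i j)) :=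
  (Fin.cons_self_tail (braTuple ξ i j)).symm

theorem tail_braTuple_min_max (ξ : Fin (n + 2) → L) (i : Fin (n + 2)) (j : Fin (n + 1)) :
    Fin.tail (braTuple ξ (min i (i.succAbove j)) (max i (i.succAbove j))) =
      (ξ ∘ i.succAbove) ∘ j.succAbove := by
  ext m
  simp only [Fin.tail, braTuple, Fin.val_succ, Nat.add_eq_zero_iff, one_ne_zero, and_false,
    if_false, Function.comp_apply]
  congr 1
  ext
  rcases lt_or_gt_of_ne (Fin.succAbove_ne i j) with h | h
  · rw [min_eq_right h.le, max_eq_left h.le]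
    have := val_succAbove_of_lt h
    simp only [Fin.succAbove, Fin.lt_def] at *
    grind
  · rw [min_eq_left h.le, max_eq_right h.le]
    have := val_succAbove_of_gt h
    simp only [Fin.succAbove, Fin.lt_def] at *
    grind

end BracketTuples

section CochainTerms

/-- A cochain that changes sign whenever one of its arguments does: the weakening of additivity
in each argument that makes `F (…, ⁅x, y⁆, …)` antisymmetric in `x` and `y`. -/
def IsSlotwiseOdd {ι L A : Type*} [DecidableEq ι] [Neg L] [Neg A] (F : (ι → L) → A) : Prop :=
  ∀ v s, F (Function.update v s (-v s)) = -F v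

theorem isSlotwiseOdd_alternatingMap {ι L A : Type*} [DecidableEq ι] [AddCommGroup L]
    [AddCommGroup A] (ω : L [⋀^ι]→ₗ[ℤ] A) : IsSlotwiseOdd ω := fun v s => by
  simp [AlternatingMap.map_update_neg]

theorem IsSlotwiseOdd.insertNth_neg {n : ℕ} {L A : Type*} [Neg L] [Neg A]
    {F : (Fin (n + 1) → L) → A} (hF : IsSlotwiseOdd F) (s : Fin (n + 1)) (x : L) (u : Fin n → L) :
    F (s.insertNth (-x) u) = -F (s.insertNth x u) := by
  simpa using hF (s.insertNth x u) s

variable {K L A : Type*} [CommRing K] [AddCommGroup A] [Module K A] {k n : ℕ}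

/-- The leading term `v ↦ D (v 0) (F (v 1, …, v k))` of the exterior derivative. -/
def leadingTerm (D : L → Module.End K A) (F : (Fin k → L) → A) : (Fin (k + 1) → L) → A :=
  fun v => D (v 0) (F (Fin.tail v))

theorem antisymmetrize_leadingTerm (D : L → Module.End K A) (F : (Fin k → L) → A)
    (ξ : Fin (k + 1) → L) :
    antisymmetrize K (leadingTerm D F) ξ =
      ∑ i : Fin (k + 1), (-1 : ℤ) ^ (i : ℕ) • D (ξ i) (antisymmetrize K F (ξ ∘ i.succAbove)) := by
  rw [antisymmetrize_eq_sum_removeNth]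
  simp [leadingTerm, antisymmetrize_apply]

variable [LieRing L]

theorem antisymmetrize_comp_bracketAt {F : (Fin (n + 1) → L) → A} (hF : IsSlotwiseOdd F)
    (s : Fin (n + 1)) (ξ : Fin (n + 2) → L) :
    antisymmetrize K (fun v => F (bracketAt s v)) ξ =
      -2 • ∑ i : Fin (n + 2), ∑ j : Fin (n + 2), if i < j then (-1 : ℤ) ^ (i + j : ℕ) •
        antisymmetrize K (fun w => F (s.insertNth ⁅ξ i, ξ j⁆ w)) (Fin.tail (braTuple ξ i j))
      else 0 := by
  let g (i j : Fin (n + 2)) : A := antisymmetrize K (fun w => F (s.insertNth ⁅ξ i, ξ j⁆ w))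
    (Fin.tail (braTuple ξ (min i j) (max i j)))
  have g_skew (i j : Fin (n + 2)) : g j i = -g i j := by
    simp only [g, ← lie_skew (ξ i) (ξ j), hF.insertNth_neg, min_comm j, max_comm j]
    simp [antisymmetrize_apply]
  have expand : antisymmetrize K (fun v => F (bracketAt s v)) ξ =
      ∑ i : Fin (n + 2), ∑ j : Fin (n + 1), (-1 : ℤ) ^ (i + j : ℕ) • g i (i.succAbove j) := by
    simp only [bracketAt_eq_insertNth, g, tail_braTuple_min_max]
    simp only [antisymmetrize_eq_sum_removeNth _ ξ, antisymmetrize_eq_sum_removeNth _ (ξ ∘ _),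
      Finset.smul_sum, smul_smul, ← pow_add]
    rfl
  rw [expand, sum_neg_one_pow_smul_succAbove, Finset.smul_sum]
  refine Finset.sum_congr rfl fun i _ => ?_
  rw [Finset.smul_sum]
  refine Finset.sum_congr rfl fun j _ => ?_
  split_ifs with h
  · rw [g_skew, ← neg_add', ← two_nsmul]
    simp only [g, min_eq_left h.le, max_eq_right h.le]
    module
  · simp

theorem sum_bracketAt_antisymmetrize {F : (Fin k → L) → A} (hF : IsSlotwiseOdd F)
    (ξ : Fin (k + 1) → L) :
    ∑ s : Fin k, (-1 : ℤ) ^ (s : ℕ) • antisymmetrize K (fun v => F (bracketAt s v)) ξ =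
      -2 • ∑ i : Fin (k + 1), ∑ j : Fin (k + 1), if i < j then
        (-1 : ℤ) ^ (i + j : ℕ) • antisymmetrize K F (braTuple ξ i j) else 0 := by
  cases k with
  | zero => simp
  | succ n =>
    simp only [antisymmetrize_comp_bracketAt hF]
    simp only [smul_comm _ (-2 : ℤ), ← Finset.smul_sum]
    congr 1
    simp only [Finset.smul_sum]
    rw [Finset.sum_comm]
    refine Finset.sum_congr rfl fun i _ => ?_
    rw [Finset.sum_comm]
    refine Finset.sum_congr rfl fun j _ => ?_
    split_ifs with h
    · rw [braTuple_eq_cons, antisymmetrize_cons, Finset.smul_sum]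
      exact Finset.sum_congr rfl fun s _ => smul_comm _ _ _
    · simp

/-- The alternating sum over all slots `s` of `F` with the bracket of the first two arguments
inserted at `s`. -/
def bracketTerm (F : (Fin k → L) → A) : (Fin (k + 1) → L) → A :=
  fun v => ∑ s : Fin k, (-1 : ℤ) ^ (s : ℕ) • F (bracketAt s v)

theorem antisymmetrize_bracketTerm (F : (Fin k → L) → A) (ξ : Fin (k + 1) → L) :
    antisymmetrize K (bracketTerm F) ξ =
      ∑ s : Fin k, (-1 : ℤ) ^ (s : ℕ) • antisymmetrize K (fun v => F (bracketAt s v)) ξ := by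
  have bracketTerm_eq : bracketTerm F = ∑ s : Fin k, (-1 : ℤ) ^ (s : ℕ) •
      fun v : Fin (k + 1) → L => F (bracketAt s v) := by
    ext v
    simp [bracketTerm]
  simp [bracketTerm_eq]

theorem covDRaw_smul (D : L → Module.End K A) (c : K) (F : (Fin k → L) → A) :
    covDRaw (fun x => D x) (c • F) = c • covDRaw (fun x => D x) F := by
  funext ξ
  simp only [covDRaw, Pi.smul_apply, map_smul, smul_add, Finset.smul_sum, smul_ite, smul_zero,
    smul_comm c]

end CochainTerms

section Differential

variable {K L A : Type*} [Field K] [LieRing L] [AddCommGroup A] [Module K A] {k : ℕ}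

/-- A representative, before antisymmetrisation, of the exterior derivative: it satisfies
`d (antisymmetrize F) = antisymmetrize (preCovD D F)`. The factor `2⁻¹` compensates for the
antisymmetrisation running over ordered pairs of bracketed arguments. -/
def preCovD (D : L → Module.End K A) (F : (Fin k → L) → A) : (Fin (k + 1) → L) → A :=
  leadingTerm D F - (2⁻¹ : K) • bracketTerm F

theorem covDRaw_antisymmetrize [CharZero K] (D : L → Module.End K A) {F : (Fin k → L) → A}
    (hF : IsSlotwiseOdd F) :
    covDRaw (fun x => D x) (antisymmetrize K F) = antisymmetrize K (preCovD D F) := by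
  funext ξ
  rw [preCovD, map_sub, map_smul, Pi.sub_apply, Pi.smul_apply, antisymmetrize_leadingTerm,
    antisymmetrize_bracketTerm, sum_bracketAt_antisymmetrize hF, covDRaw]
  module

theorem covDRaw_alternatingMap [CharZero K] (D : L → Module.End K A) (ω : L [⋀^Fin k]→ₗ[ℤ] A) :
    covDRaw (fun x => D x) ω = (k.factorial : K)⁻¹ • antisymmetrize K (preCovD D ω) := by
  have factorial_ne_zero : (k.factorial : K) ≠ 0 := Nat.cast_ne_zero.2 k.factorial_ne_zero
  have eq_smul : ⇑ω = (k.factorial : K)⁻¹ • antisymmetrize K ω := by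
    rw [antisymmetrize_alternatingMap, Fintype.card_fin, inv_smul_smul₀ factorial_ne_zero]
  conv_lhs => rw [eq_smul]
  rw [covDRaw_smul, covDRaw_antisymmetrize D (isSlotwiseOdd_alternatingMap ω)]

end Differential

section Pairing

variable {K L A B C : Type*} [CommRing K] [AddCommGroup A] [Module K A]
  [AddCommGroup B] [Module K B] [AddCommGroup C] [Module K C] {p q : ℕ}

/-- The tensor product of cochains followed by a bilinear pairing `β` of their values: the first
`p` arguments go to `F`, the last `q` to `G`. -/
def pairCochain (β : A →ₗ[K] B →ₗ[K] C) : ((Fin p → L) → A) →ₗ[K] ((Fin q → L) → B) →ₗ[K]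
    ((Fin (p + q) → L) → C) :=
  LinearMap.mk₂ K (fun F G v => β (F (v ∘ Fin.castAdd q)) (G (v ∘ Fin.natAdd p)))
    (fun _ _ _ => by ext; simp) (fun _ _ _ => by ext; simp)
    (fun _ _ _ => by ext; simp) (fun _ _ _ => by ext; simp)

variable (β : A →ₗ[K] B →ₗ[K] C)

@[simp]
theorem pairCochain_apply (F : (Fin p → L) → A) (G : (Fin q → L) → B) (v : Fin (p + q) → L) :
    pairCochain β F G v = β (F (v ∘ Fin.castAdd q)) (G (v ∘ Fin.natAdd p)) := rfl

theorem IsSlotwiseOdd.pairCochain [Neg L] {F : (Fin p → L) → A} {G : (Fin q → L) → B}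
    (hF : IsSlotwiseOdd F) (hG : IsSlotwiseOdd G) : IsSlotwiseOdd (pairCochain β F G) := by
  intro v s
  induction s using Fin.addCases with
  | left i =>
    rw [pairCochain_apply, Function.update_comp_eq_of_injective _ (Fin.castAdd_injective p q),
      Function.update_comp_eq_of_forall_ne _ _ fun j => (castAdd_lt_natAdd i j).ne']
    simpa using congr(β $(hF (v ∘ Fin.castAdd q) i) (G (v ∘ Fin.natAdd p)))
  | right j =>
    rw [pairCochain_apply, Function.update_comp_eq_of_injective _ (Fin.natAdd_injective q p),
      Function.update_comp_eq_of_forall_ne _ _ fun i => (castAdd_lt_natAdd i j).ne]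
    simpa using congr(β (F (v ∘ Fin.castAdd q)) $(hG (v ∘ Fin.natAdd p) j))

theorem antisymmetrize_pairCochain_comp_perm (F : (Fin p → L) → A) (G : (Fin q → L) → B)
    (ρ : Perm (Fin p)) (π : Perm (Fin q)) :
    antisymmetrize K (pairCochain β (fun u => F (u ∘ ρ)) (fun w => G (w ∘ π))) =
      (Perm.sign ρ * Perm.sign π : ℤ) • antisymmetrize K (pairCochain β F G) := by
  have comp_eq : pairCochain β (fun u => F (u ∘ ρ)) (fun w => G (w ∘ π)) =
      fun v => pairCochain β F G (v ∘ finSumFinEquiv.permCongr (Perm.sumCongr ρ π)) := by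
    ext v
    simp [Function.comp_def, Equiv.permCongr_apply]
  rw [comp_eq, antisymmetrize_comp_perm]
  simp [Perm.sign_permCongr, Perm.sign_sumCongr]

theorem antisymmetrize_pairCochain_antisymmetrize_left (F : (Fin p → L) → A)
    (G : (Fin q → L) → B) :
    antisymmetrize K (pairCochain β (antisymmetrize K F) G) =
      (p.factorial : K) • antisymmetrize K (pairCochain β F G) := by
  have term_eq (ρ : Perm (Fin p)) : (Perm.sign ρ : ℤ) •
      antisymmetrize K (pairCochain β (fun u => F (u ∘ ρ)) G) =
        antisymmetrize K (pairCochain β F G) := by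
    simpa [sign_smul_sign_smul] using congr((Perm.sign ρ : ℤ) •
      $(antisymmetrize_pairCochain_comp_perm β F G ρ 1))
  rw [antisymmetrize_eq_sum F]
  simp [term_eq, Fintype.card_perm, Nat.cast_smul_eq_nsmul]

theorem antisymmetrize_pairCochain_antisymmetrize_right (F : (Fin p → L) → A)
    (G : (Fin q → L) → B) :
    antisymmetrize K (pairCochain β F (antisymmetrize K G)) =
      (q.factorial : K) • antisymmetrize K (pairCochain β F G) := by
  have term_eq (π : Perm (Fin q)) : (Perm.sign π : ℤ) •
      antisymmetrize K (pairCochain β F (fun w => G (w ∘ π))) =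
        antisymmetrize K (pairCochain β F G) := by
    simpa [sign_smul_sign_smul] using congr((Perm.sign π : ℤ) •
      $(antisymmetrize_pairCochain_comp_perm β F G 1 π))
  rw [antisymmetrize_eq_sum G]
  simp [term_eq, Fintype.card_perm, Nat.cast_smul_eq_nsmul]

end Pairing

section Wedge

variable {K L A B C : Type*} [Field K] [AddCommGroup A] [Module K A] [AddCommGroup B] [Module K B]
  [AddCommGroup C] [Module K C] {p q : ℕ}

/-- The wedge product of cochains along a bilinear pairing `β` of their values. -/
def wedge (β : A →ₗ[K] B →ₗ[K] C) (F : (Fin p → L) → A) (G : (Fin q → L) → B) :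
    (Fin (p + q) → L) → C :=
  ((p.factorial * q.factorial : ℕ) : K)⁻¹ • antisymmetrize K (pairCochain β F G)

variable (β : A →ₗ[K] B →ₗ[K] C)

theorem wedge_inv_factorial_smul_antisymmetrize_left [CharZero K]
    (F : (Fin (p + 1) → L) → A) (G : (Fin q → L) → B) :
    wedge β ((p.factorial : K)⁻¹ • antisymmetrize K F) G =
      ((p.factorial * q.factorial : ℕ) : K)⁻¹ • antisymmetrize K (pairCochain β F G) := by
  have := Nat.cast_ne_zero (R := K).2 (p + 1).factorial_ne_zero
  rw [wedge, map_smul, LinearMap.smul_apply, map_smul,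
    antisymmetrize_pairCochain_antisymmetrize_left]
  simp only [smul_smul]
  congr 1
  push_cast
  field_simp

theorem wedge_inv_factorial_smul_antisymmetrize_right [CharZero K]
    (F : (Fin p → L) → A) (G : (Fin (q + 1) → L) → B) :
    wedge β F ((q.factorial : K)⁻¹ • antisymmetrize K G) =
      ((p.factorial * q.factorial : ℕ) : K)⁻¹ • antisymmetrize K (pairCochain β F G) := by
  have := Nat.cast_ne_zero (R := K).2 (q + 1).factorial_ne_zero
  rw [wedge, map_smul, map_smul, antisymmetrize_pairCochain_antisymmetrize_right]
  simp only [smul_smul]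
  congr 1
  push_cast
  field_simp

end Wedge

section LeibnizTerms

variable {K L A B C : Type*} [CommRing K] [AddCommGroup A] [Module K A]
  [AddCommGroup B] [Module K B] [AddCommGroup C] [Module K C] {p q : ℕ}

theorem tail_comp_natAdd (v : Fin (p + q + 1) → L) :
    Fin.tail v ∘ Fin.natAdd p =
      (v ∘ finCongr (Nat.add_right_comm p 1 q)) ∘ Fin.natAdd (p + 1) := by
  ext i
  simp only [Fin.tail, Function.comp_apply]
  congr 1
  ext
  simp
  omega

theorem tail_comp_castAdd_eq_comp_cycleRange (v : Fin (p + (q + 1)) → L) :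
    Fin.tail (n := p + q) v ∘ Fin.castAdd q =
      (v ∘ (Fin.natAdd p (0 : Fin (q + 1))).cycleRange) ∘ Fin.castAdd (q + 1) := by
  ext i
  simp only [Fin.tail, Function.comp_apply]
  congr 1
  ext
  simp [val_cycleRange, castAdd_lt_natAdd]

theorem tail_comp_natAdd_eq_comp_cycleRange (v : Fin (p + (q + 1)) → L) :
    Fin.tail (n := p + q) v ∘ Fin.natAdd p =
      Fin.tail ((v ∘ (Fin.natAdd p (0 : Fin (q + 1))).cycleRange) ∘ Fin.natAdd p) := by
  ext i
  simp only [Fin.tail, Function.comp_apply]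
  congr 1
  ext
  simp [val_cycleRange, Fin.lt_def, Fin.ext_iff, Nat.add_assoc]

theorem antisymmetrize_leadingTerm_pairCochain {β : A →ₗ[K] B →ₗ[K] C} {DA : L → Module.End K A}
    {DB : L → Module.End K B} {DC : L → Module.End K C}
    (hD : ∀ x a b, DC x (β a b) = β (DA x a) b + β a (DB x b))
    (F : (Fin p → L) → A) (G : (Fin q → L) → B) (ξ : Fin (p + q + 1) → L) :
    antisymmetrize K (leadingTerm DC (pairCochain β F G)) ξ =
      antisymmetrize K (pairCochain β (leadingTerm DA F) G)
          (ξ ∘ finCongr (Nat.add_right_comm p 1 q)) +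
        (-1 : ℤ) ^ p • antisymmetrize K (pairCochain β F (leadingTerm DB G)) ξ := by
  let c : Perm (Fin (p + (q + 1))) := (Fin.natAdd p 0).cycleRange
  have split : leadingTerm DC (pairCochain β F G) =
      (fun v => pairCochain β (leadingTerm DA F) G (v ∘ finCongr (Nat.add_right_comm p 1 q))) +
        fun v : Fin (p + (q + 1)) → L => pairCochain β F (leadingTerm DB G) (v ∘ c) := by
    ext v
    simp only [leadingTerm, pairCochain_apply, hD, Pi.add_apply]
    congr 1
    · rw [tail_comp_natAdd]
      rfl
    · have head_eq : v 0 = ((v ∘ c) ∘ Fin.natAdd p) 0 := by simp [c]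
      exact congr(β (F $(tail_comp_castAdd_eq_comp_cycleRange (q := q) v))
        (DB $head_eq (G $(tail_comp_natAdd_eq_comp_cycleRange (q := q) v))))
  rw [split, map_add, Pi.add_apply, ← antisymmetrize_comp_equiv]
  refine congrArg _ ((congrFun (antisymmetrize_comp_perm _ c) ξ).trans ?_)
  simp [c]

variable [LieRing L]

theorem bracketAt_castAdd_comp_castAdd (t : Fin p) (v : Fin (p + q + 1) → L) :
    bracketAt (Fin.castAdd q t) v ∘ Fin.castAdd q =
      bracketAt t (v ∘ finCongr (Nat.add_right_comm p 1 q) ∘ Fin.castAdd q) := by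
  have := t.pos
  ext i
  simp only [bracketAt, Function.comp_apply, Fin.castAdd_inj, Fin.lt_def, Fin.val_castAdd]
  congr 3
  ext
  simp [Nat.mod_eq_of_lt (show 1 < p + q + 1 by omega), Nat.mod_eq_of_lt (show 1 < p + 1 by omega)]

theorem bracketAt_castAdd_comp_natAdd (t : Fin p) (v : Fin (p + q + 1) → L) :
    bracketAt (Fin.castAdd q t) v ∘ Fin.natAdd p =
      v ∘ finCongr (Nat.add_right_comm p 1 q) ∘ Fin.natAdd (p + 1) := by
  ext i
  have lt := castAdd_lt_natAdd t i
  simp only [bracketAt, Function.comp_apply, lt.ne', lt.not_gt, if_false]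
  congr 1
  ext
  simp
  omega

theorem bracketAt_natAdd_comp_castAdd (t : Fin q) (v : Fin (p + (q + 1)) → L) :
    bracketAt (Fin.natAdd p t) v ∘ Fin.castAdd q =
      (v ∘ pairPastBlock p q) ∘ Fin.castAdd (q + 1) := by
  ext i
  have lt := castAdd_lt_natAdd i t
  simp only [bracketAt, Function.comp_apply, lt.ne, lt, if_false, if_true]
  congr 1
  ext
  simp [val_pairPastBlock t.pos]

theorem bracketAt_natAdd_comp_natAdd (t : Fin q) (v : Fin (p + (q + 1)) → L) :
    bracketAt (Fin.natAdd p t) v ∘ Fin.natAdd p =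
      bracketAt t ((v ∘ pairPastBlock p q) ∘ Fin.natAdd p) := by
  have := t.pos
  have zero_eq : pairPastBlock p q (Fin.natAdd p 0) = (0 : Fin (p + q + 1)) := by
    ext
    simp [val_pairPastBlock t.pos]
  have one_eq : pairPastBlock p q (Fin.natAdd p 1) = (1 : Fin (p + q + 1)) := by
    have one_lt : 1 < p + (q + 1) := by omega
    ext
    simp [val_pairPastBlock t.pos, Nat.mod_eq_of_lt (show 1 < q + 1 by omega),
      Nat.mod_eq_of_lt one_lt]
  ext i
  simp only [bracketAt, Function.comp_apply, Fin.natAdd_inj, zero_eq, one_eq]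
  by_cases hi : i = t
  · simp only [hi, if_true]
  · simp only [hi, if_false]
    congr 1
    ext
    simp only [val_pairPastBlock t.pos, Fin.val_natAdd, Fin.lt_def]
    grind [Fin.val_ne_of_ne hi]

theorem antisymmetrize_bracketTerm_pairCochain (β : A →ₗ[K] B →ₗ[K] C)
    (F : (Fin p → L) → A) (G : (Fin q → L) → B) (ξ : Fin (p + q + 1) → L) :
    antisymmetrize K (bracketTerm (pairCochain β F G)) ξ =
      antisymmetrize K (pairCochain β (bracketTerm F) G)
          (ξ ∘ finCongr (Nat.add_right_comm p 1 q)) +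
        (-1 : ℤ) ^ p • antisymmetrize K (pairCochain β F (bracketTerm G)) ξ := by
  have split : bracketTerm (pairCochain β F G) =
      (fun v => pairCochain β (bracketTerm F) G (v ∘ finCongr (Nat.add_right_comm p 1 q))) +
        (-1 : ℤ) ^ p • fun v : Fin (p + (q + 1)) → L =>
          pairCochain β F (bracketTerm G) (v ∘ pairPastBlock p q) := by
    ext v
    simp only [bracketTerm, Fin.sum_univ_add, bracketAt_castAdd_comp_castAdd,
      bracketAt_castAdd_comp_natAdd, bracketAt_natAdd_comp_castAdd, bracketAt_natAdd_comp_natAdd,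
      Pi.add_apply, Pi.smul_apply, Function.comp_assoc,
      pairCochain_apply, map_sum, LinearMap.sum_apply, map_zsmul, LinearMap.smul_apply,
      Fin.val_castAdd, Fin.val_natAdd, pow_add, mul_smul, Finset.smul_sum]
  rw [split, map_add, Pi.add_apply, ← antisymmetrize_comp_equiv, map_zsmul, Pi.smul_apply]
  congr 2
  refine (congrFun (antisymmetrize_comp_perm _ (pairPastBlock p q)) ξ).trans ?_
  rw [sign_pairPastBlock, Units.val_one, one_smul]

end LeibnizTerms

section Leibniz

variable {K L A B C : Type*} [Field K] [LieRing L] [AddCommGroup A] [Module K A]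
  [AddCommGroup B] [Module K B] [AddCommGroup C] [Module K C] {p q : ℕ}

theorem antisymmetrize_preCovD_pairCochain {β : A →ₗ[K] B →ₗ[K] C} {DA : L → Module.End K A}
    {DB : L → Module.End K B} {DC : L → Module.End K C}
    (hD : ∀ x a b, DC x (β a b) = β (DA x a) b + β a (DB x b))
    (F : (Fin p → L) → A) (G : (Fin q → L) → B) (ξ : Fin (p + q + 1) → L) :
    antisymmetrize K (preCovD DC (pairCochain β F G)) ξ =
      antisymmetrize K (pairCochain β (preCovD DA F) G)
          (ξ ∘ finCongr (Nat.add_right_comm p 1 q)) +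
        (-1 : ℤ) ^ p • antisymmetrize K (pairCochain β F (preCovD DB G)) ξ := by
  simp only [preCovD, map_sub, map_smul, LinearMap.sub_apply, LinearMap.smul_apply, Pi.sub_apply,
    Pi.smul_apply, antisymmetrize_leadingTerm_pairCochain hD,
    antisymmetrize_bracketTerm_pairCochain]
  module

theorem covDRaw_wedge [CharZero K] {β : A →ₗ[K] B →ₗ[K] C} {DA : L → Module.End K A}
    {DB : L → Module.End K B} {DC : L → Module.End K C}
    (hD : ∀ x a b, DC x (β a b) = β (DA x a) b + β a (DB x b))
    (ω : L [⋀^Fin p]→ₗ[ℤ] A) (τ : L [⋀^Fin q]→ₗ[ℤ] B) (ξ : Fin (p + q + 1) → L) :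
    covDRaw (fun x => DC x) (wedge β ω τ) ξ =
      wedge β (covDRaw (fun x => DA x) ω) τ (ξ ∘ finCongr (Nat.add_right_comm p 1 q)) +
        (-1 : ℤ) ^ p • wedge β ω (covDRaw (fun x => DB x) τ) ξ := by
  have odd : IsSlotwiseOdd (pairCochain β ω τ) :=
    (isSlotwiseOdd_alternatingMap ω).pairCochain β (isSlotwiseOdd_alternatingMap τ)
  rw [covDRaw_alternatingMap, covDRaw_alternatingMap, wedge_inv_factorial_smul_antisymmetrize_left,
    wedge_inv_factorial_smul_antisymmetrize_right, wedge, covDRaw_smul,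
    covDRaw_antisymmetrize DC odd, Pi.smul_apply, antisymmetrize_preCovD_pairCochain hD, smul_add,
    Pi.smul_apply, Pi.smul_apply, smul_comm]

end Leibniz

section EndomorphismValued

attribute [local instance] LieRing.ofAssociativeRing

variable {K L M : Type*} [Field K] [AddCommGroup M] [Module K M] {p q : ℕ}

theorem covDRaw_endCommRaw_coe [LieRing L] (D : L → Module.End K M)
    (F : (Fin p → L) → Module.End K M) :
    covDRaw (endCommRaw fun x => D x) (fun v => ⇑(F v)) =
      fun ξ => ⇑(covDRaw (fun x => LieAlgebra.ad K (Module.End K M) (D x)) F ξ) := by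
  funext ξ m
  simp only [covDRaw, endCommRaw, Pi.add_apply, Finset.sum_apply, Pi.smul_apply,
    LinearMap.add_apply, LinearMap.sum_apply, LinearMap.smul_apply, LieAlgebra.ad_apply,
    Ring.lie_def, LinearMap.sub_apply, Module.End.mul_apply]
  congr! 3
  split_ifs <;> rfl

theorem brWedgeRaw_coe (F : (Fin p → L) → Module.End K M) (G : (Fin q → L) → Module.End K M) :
    brWedgeRaw K (fun v => ⇑(F v)) (fun v => ⇑(G v)) =
      fun ξ => ⇑(wedge (LieAlgebra.ad K (Module.End K M)).toLinearMap F G ξ) := by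
  funext ξ m
  simp [brWedgeRaw, wedge, antisymmetrize_apply, Ring.lie_def, Function.comp_def]

theorem lieRinehart_covariant_derivative_graded_bracket_leibniz_general [CharZero K] [LieRing L]
    (D : L → Module.End K M) (ω : L [⋀^Fin p]→ₗ[ℤ] Module.End K M)
    (τ : L [⋀^Fin q]→ₗ[ℤ] Module.End K M) (ξ : Fin (p + q + 1) → L) (m : M) :
    covDRaw (endCommRaw fun x => D x) (brWedgeRaw K (fun v => ⇑(ω v)) (fun v => ⇑(τ v))) ξ m =
      brWedgeRaw K (covDRaw (endCommRaw fun x => D x) (fun v => ⇑(ω v))) (fun v => ⇑(τ v))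
          (ξ ∘ Fin.cast (Nat.add_right_comm p 1 q)) m +
        ((-1 : ℤ) ^ p • brWedgeRaw K (fun v => ⇑(ω v))
          (covDRaw (endCommRaw fun x => D x) (fun v => ⇑(τ v)))) ξ m := by
  have ad_leibniz (x : L) (S T : Module.End K M) : ⁅D x, ⁅S, T⁆⁆ = ⁅⁅D x, S⁆, T⁆ + ⁅S, ⁅D x, T⁆⁆ :=
    leibniz_lie (D x) S T
  simp only [brWedgeRaw_coe, covDRaw_endCommRaw_coe, Pi.smul_apply]
  exact DFunLike.congr_fun (covDRaw_wedge ad_leibniz ω τ ξ) m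

end EndomorphismValued

/-- The additive-multilinear `End_K(M)`-valued form underlying an `R`-multilinear
`End_R(M)`-valued one. -/
def restrictScalarsForm (K : Type*) {R L M ι : Type*} [CommRing K] [CommRing R] [Algebra K R]
    [AddCommGroup L] [Module R L] [AddCommGroup M] [Module R M] [Module K M] [IsScalarTower K R M]
    (ω : L [⋀^ι]→ₗ[R] Module.End R M) : L [⋀^ι]→ₗ[ℤ] Module.End K M where
  toFun v := (ω v).restrictScalars K
  map_update_add' v i x y := by ext; simp
  map_update_smul' v i c x := by ext; simp [← Int.cast_smul_eq_zsmul R]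
  map_eq_zero_of_eq' v i j h hij := by ext; simp [ω.map_eq_zero_of_eq v h hij]

/-- The `K`-linear covariant derivatives `∇ₓ` of a connection. -/
def IsConnection.toEnd {K R L M : Type*} [CommRing K] [CommRing R] [Algebra K R]
    [LieRing L] [Module R L] [Module K L] [AddCommGroup M] [Module R M] [Module K M]
    {a : L →ₗ[R] Derivation K R R} {D : L → M → M} (hD : IsConnection a D) (x : L) :
    Module.End K M where
  toFun := D x
  map_add' := hD.add_right x
  map_smul' c m := hD.smul_right_k c x m

/-- For an `L`-connection `∇` on `M` and `End_R(M)`-valued `p`- and `q`-forms `ω`, `τ`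
of `L`, the covariant exterior derivative of the induced connection `∇^End` satisfies
`d^{∇^End}[ω, τ] = [d^{∇^End} ω, τ] + (−1)^p [ω, d^{∇^End} τ]`. -/
theorem lieRinehart_covariant_derivative_graded_bracket_leibniz
    {K R L M : Type*} [Field K] [CharZero K] [CommRing R] [Algebra K R]
    [LieRing L] [Module R L] [Module K L] [IsScalarTower K R L] [LieAlgebra K L]
    [AddCommGroup M] [Module R M] [Module K M] [IsScalarTower K R M]
    (a : L →ₗ[R] Derivation K R R) (ha : IsLieRinehart a)
    (D : L → M → M) (hD : IsConnection a D)
    (p q : ℕ) (ω : AlternatingMap R L (Module.End R M) (Fin p))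
    (τ : AlternatingMap R L (Module.End R M) (Fin q)) :
    ∀ (ξ : Fin (p + q + 1) → L) (m : M),
      covDRaw (endCommRaw D) (brWedgeRaw K (fun v => ⇑(ω v)) (fun v => ⇑(τ v))) ξ m
        = brWedgeRaw K (covDRaw (endCommRaw D) (fun v => ⇑(ω v))) (fun v => ⇑(τ v))
            (fun i => ξ (Fin.cast (show p + 1 + q = p + q + 1 by omega) i)) m
          + ((-1 : ℤ) ^ p •
              brWedgeRaw K (fun v => ⇑(ω v)) (covDRaw (endCommRaw D) (fun v => ⇑(τ v))))
              ξ m :=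
  lieRinehart_covariant_derivative_graded_bracket_leibniz_general hD.toEnd
    (restrictScalarsForm K ω) (restrictScalarsForm K τ)
end
end

section
/- Let ∇ be an L-connection on an R-module M. Then for every M-valued k-form ω of L, (d^∇∘d^∇)ω = μ(R^∇)ω, where R^∇ is the curvature of ∇; in particular, for an element s ∈ M (a 0-form), (d^∇(d^∇ s))(ξ, η) = R^∇(ξ, η)s for all ξ, η ∈ L. Consequently d^∇∘d^∇ = 0 on all M-valued forms if and only if ∇ is flat (R^∇ = 0). -/
open scoped BigOperators

noncomputable section

/-- The curvature `R^∇(x,y) = ∇ₓ∘∇_y − ∇_y∘∇ₓ − ∇_{⁅x,y⁆}` of a connection. -/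
def curvRaw {L M : Type*} [LieRing L] [AddCommGroup M] (D : L → M → M) (x y : L) :
    M → M := fun m => D x (D y m) - D y (D x m) - D ⁅x, y⁆ m

/-- The raw action `μ(A)` of an `End`-valued `2`-cochain `A` on an `M`-valued
`k`-cochain `ω`: `(μ(A)ω)(ξ₁,…,ξ_{k+2}) = (1/(2!·k!)) Σ_σ sign σ ·
A(ξ_{σ(1)}, ξ_{σ(2)})(ω(ξ_{σ(3)},…,ξ_{σ(k+2)}))`. -/
def muRaw (K : Type*) {L M : Type*} [Field K] [AddCommGroup M] [Module K M] {k : ℕ}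
    (A : L → L → (M → M)) (ω : (Fin k → L) → M) : (Fin (k + 2) → L) → M := fun ξ =>
  (((Nat.factorial 2 * Nat.factorial k : ℕ) : K))⁻¹ •
    ∑ σ : Equiv.Perm (Fin (k + 2)), (Equiv.Perm.sign σ : ℤ) •
      A (ξ (σ 0)) (ξ (σ 1)) (ω fun i => ξ (σ (i.addNat 2)))

/-!
Write `ι_x` for the interior product and `L_x` for the Lie derivative of `M`-valued forms. The
defining formula of `d = d^∇` unfolds to Cartan's formula `ι_x d = L_x - d ι_x`. Together with
`ι_y L_x = L_x ι_y - ι_[x,y]` and `[L_x, L_y] - L_[x,y] = R(x, y)`, induction on the degree gives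
`[L_x, d] = R(x, ·) ∧`, and hence `ι_x d² = R(x, ·) ∧ + d² ι_x`. By the antisymmetry of `R`, half
of the double alternation of `x ↦ y ↦ R(x, y) ∘ ω` satisfies the same recursion, and this half is
`μ(R) ω` because summing over all permutations counts each term of the double alternation `k!`
times.
-/

namespace LieConnection

open AlternatingMap Function

section AlternatingMaps

variable {S V W : Type*} [CommRing S] [AddCommGroup V] [Module S V] [AddCommGroup W] [Module S W]
  {k : ℕ}

/-- The interior product `ι_x`, inserting `x` as first argument. -/
def interior (x : V) : V [⋀^Fin (k + 1)]→ₗ[S] W →ₗ[S] V [⋀^Fin k]→ₗ[S] W :=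
  curryLeftLinearMap.flip x

/-- Composition of alternating maps with an endomorphism of the codomain. -/
def postcomp : Module.End S W →ₗ[S] Module.End S (V [⋀^Fin k]→ₗ[S] W) :=
  LinearMap.mk₂ S LinearMap.compAlternatingMap (fun _ _ _ ↦ rfl) (fun _ _ _ ↦ rfl)
    LinearMap.compAlternatingMap_add fun c g ω ↦ g.compAlternatingMap_smul c ω

theorem interior_apply (x : V) (ω : V [⋀^Fin (k + 1)]→ₗ[S] W) (η : Fin k → V) :
    interior x ω η = ω (Fin.cons x η) := rfl

theorem interior_postcomp (x : V) (g : Module.End S W) (ω : V [⋀^Fin (k + 1)]→ₗ[S] W) :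
    interior x (postcomp g ω) = postcomp g (interior x ω) := rfl

theorem interior_add (x y : V) (ω : V [⋀^Fin (k + 1)]→ₗ[S] W) :
    interior (x + y) ω = interior x ω + interior y ω := ω.curryLeft.map_add x y

theorem interior_self (x : V) (ω : V [⋀^Fin (k + 2)]→ₗ[S] W) :
    interior x (interior x ω) = 0 := curryLeft_same ω x

theorem interior_comm (x y : V) (ω : V [⋀^Fin (k + 2)]→ₗ[S] W) :
    interior x (interior y ω) = -interior y (interior x ω) := by
  have hsum := interior_self (x + y) ω
  simp only [interior_add, map_add, interior_self, zero_add, add_zero] at hsum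
  exact eq_neg_of_add_eq_zero_right hsum

theorem ext_interior {ω ω' : V [⋀^Fin (k + 1)]→ₗ[S] W}
    (h : ∀ x, interior x ω = interior x ω') : ω = ω' := by
  ext ξ
  rw [← Fin.cons_self_tail ξ, ← interior_apply, h, interior_apply]

theorem exists_curryLeft_eq (g : V →ₗ[S] V [⋀^Fin (k + 1)]→ₗ[S] W)
    (hg : ∀ x, interior x (g x) = 0) : ∃ ω : V [⋀^Fin (k + 2)]→ₗ[S] W, ω.curryLeft = g := by
  have eq_zero_of_head_mem (η : Fin (k + 1) → V) (j : Fin (k + 1)) : g (η j) η = 0 := by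
    rw [← Fin.insertNth_self_removeNth j η, Fin.insertNth_apply_same, map_insertNth,
      Matrix.vecCons, ← interior_apply, hg, AlternatingMap.zero_apply, smul_zero]
  let ω : V [⋀^Fin (k + 2)]→ₗ[S] W :=
    { LinearMap.uncurryLeft (toMultilinearMapLM (S := S) ∘ₗ g) with
      map_eq_zero_of_eq' := by
        intro v i j hv hij
        change g (v 0) (Fin.tail v) = 0
        cases i using Fin.cases with
        | zero =>
          obtain ⟨j, rfl⟩ := Fin.exists_succ_eq.mpr hij.symm
          exact hv ▸ eq_zero_of_head_mem (Fin.tail v) j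
        | succ i =>
          cases j using Fin.cases with
          | zero => exact hv ▸ eq_zero_of_head_mem (Fin.tail v) i
          | succ j => exact (g (v 0)).map_eq_zero_of_eq _ hv (ne_of_apply_ne _ hij) }
  exact ⟨ω, rfl⟩

theorem interior_alternatizeUncurryFin_zero (f : V →ₗ[S] V [⋀^Fin 0]→ₗ[S] W) (x : V) :
    interior x (alternatizeUncurryFin f) = f x := by
  ext η
  simp [interior_apply, alternatizeUncurryFin_apply, Subsingleton.elim _ η]

theorem interior_alternatizeUncurryFin (f : V →ₗ[S] V [⋀^Fin (k + 1)]→ₗ[S] W) (x : V) :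
    interior x (alternatizeUncurryFin f) = f x - alternatizeUncurryFin (interior x ∘ₗ f) := by
  ext η
  have removeNth_succ_cons (i : Fin (k + 1)) :
      i.succ.removeNth (Fin.cons x η : Fin (k + 2) → V) = Fin.cons x (i.removeNth η) := by
    ext m
    cases m using Fin.cases <;> simp [Fin.removeNth]
  simp [interior_apply, alternatizeUncurryFin_apply, Fin.sum_univ_succ (n := k + 1),
    removeNth_succ_cons, pow_succ, sub_eq_add_neg]

theorem interior_alternatizeUncurryFin₂_zero (f : V →ₗ[S] V →ₗ[S] V [⋀^Fin 0]→ₗ[S] W) (x : V) :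
    interior x (alternatizeUncurryFin (alternatizeUncurryFinLM ∘ₗ f)) =
      alternatizeUncurryFin (f x - f.flip x) := by
  have hcomp : interior x ∘ₗ alternatizeUncurryFinLM ∘ₗ f = f.flip x :=
    LinearMap.ext fun y ↦ interior_alternatizeUncurryFin_zero (f y) x
  rw [interior_alternatizeUncurryFin, hcomp]
  exact (map_sub alternatizeUncurryFinLM (f x) (f.flip x)).symm

theorem interior_alternatizeUncurryFin₂ (f : V →ₗ[S] V →ₗ[S] V [⋀^Fin (k + 1)]→ₗ[S] W) (x : V) :
    interior x (alternatizeUncurryFin (alternatizeUncurryFinLM ∘ₗ f)) =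
      alternatizeUncurryFin (f x - f.flip x) +
        alternatizeUncurryFin (alternatizeUncurryFinLM ∘ₗ f.compr₂ (interior x)) := by
  have hcomp : interior x ∘ₗ alternatizeUncurryFinLM ∘ₗ f =
      f.flip x - alternatizeUncurryFinLM ∘ₗ f.compr₂ (interior x) :=
    LinearMap.ext fun y ↦ interior_alternatizeUncurryFin (f y) x
  rw [interior_alternatizeUncurryFin, hcomp]
  simp only [← alternatizeUncurryFinLM_apply, map_sub, LinearMap.comp_apply]
  abel

end AlternatingMaps

section CartanCalculus

variable {S L M : Type*} [CommRing S] [LieRing L] [LieAlgebra S L] [AddCommGroup M] [Module S M]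
  {k : ℕ}

/-- The action of an endomorphism `φ` of `L` on alternating maps as a derivation,
`η ↦ ∑ j, ω (η 0, …, φ (η j), …)`, encoded by moving `φ (η j)` to the front at the cost of the
sign `(-1) ^ j`. -/
def substDeriv : ∀ {k : ℕ}, Module.End S L →ₗ[S] Module.End S (L [⋀^Fin k]→ₗ[S] M)
  | 0 => 0
  | _ + 1 => LinearMap.mk₂ S (fun φ ω ↦ alternatizeUncurryFin (ω.curryLeft ∘ₗ φ))
      (fun φ ψ ω ↦ by rw [LinearMap.comp_add, alternatizeUncurryFin_add])
      (fun c φ ω ↦ by rw [LinearMap.comp_smul, alternatizeUncurryFin_smul])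
      (fun φ ω ω' ↦ by rw [curryLeft_add, LinearMap.add_comp, alternatizeUncurryFin_add])
      (fun c φ ω ↦ by rw [curryLeft_smul, LinearMap.smul_comp, alternatizeUncurryFin_smul])

theorem interior_substDeriv (φ : Module.End S L) (y : L) (ω : L [⋀^Fin (k + 1)]→ₗ[S] M) :
    interior y (substDeriv φ ω) = substDeriv φ (interior y ω) + interior (φ y) ω := by
  change interior y (alternatizeUncurryFin (ω.curryLeft ∘ₗ φ)) = _
  cases k with
  | zero => rw [interior_alternatizeUncurryFin_zero]; exact (zero_add _).symm
  | succ k =>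
    have hcomm : interior y ∘ₗ ω.curryLeft ∘ₗ φ = -((interior y ω).curryLeft ∘ₗ φ) :=
      LinearMap.ext fun z ↦ interior_comm y (φ z) ω
    rw [interior_alternatizeUncurryFin, hcomm, ← neg_one_smul S, alternatizeUncurryFin_smul,
      neg_one_smul, sub_neg_eq_add]
    exact add_comm _ _

/-- The Lie derivative of `M`-valued forms along `x`, with `D` acting on the values. -/
def lieDeriv (D : L →ₗ[S] Module.End S M) : L →ₗ[S] Module.End S (L [⋀^Fin k]→ₗ[S] M) :=
  postcomp ∘ₗ D - substDeriv ∘ₗ (LieAlgebra.ad S L : L →ₗ[S] Module.End S L)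

/-- The curvature of `D` as a bilinear map with values in endomorphisms. -/
def curvature (D : L →ₗ[S] Module.End S M) : L →ₗ[S] L →ₗ[S] Module.End S M :=
  LinearMap.mk₂ S (fun x y ↦ D x * D y - D y * D x - D ⁅x, y⁆)
    (fun x x' y ↦ by simp only [map_add, add_lie, add_mul, mul_add]; abel)
    (fun c x y ↦ by simp only [map_smul, smul_lie, smul_sub, smul_mul_assoc, mul_smul_comm])
    (fun x y y' ↦ by simp only [map_add, lie_add, add_mul, mul_add]; abel)
    (fun c x y ↦ by simp only [map_smul, lie_smul, smul_sub, smul_mul_assoc, mul_smul_comm])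

variable (D : L →ₗ[S] Module.End S M)

theorem curvature_swap (x y : L) : curvature D y x = -curvature D x y := by
  simp only [curvature, LinearMap.mk₂_apply, ← lie_skew x y, map_neg]
  abel

theorem lieDeriv_apply (x : L) (ω : L [⋀^Fin k]→ₗ[S] M) :
    lieDeriv D x ω = postcomp (D x) ω - substDeriv (LieAlgebra.ad S L x) ω := rfl

theorem lieDeriv_zero_form (x : L) (ω : L [⋀^Fin 0]→ₗ[S] M) :
    lieDeriv D x ω = postcomp (D x) ω := sub_zero _

theorem interior_lieDeriv (x y : L) (ω : L [⋀^Fin (k + 1)]→ₗ[S] M) :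
    interior y (lieDeriv D x ω) = lieDeriv D x (interior y ω) - interior ⁅x, y⁆ ω := by
  rw [lieDeriv_apply, map_sub, interior_postcomp, interior_substDeriv, lieDeriv_apply,
    LieAlgebra.ad_apply, sub_sub]

theorem lieDeriv_commutator (x y : L) (ω : L [⋀^Fin k]→ₗ[S] M) :
    lieDeriv D x (lieDeriv D y ω) - lieDeriv D y (lieDeriv D x ω) - lieDeriv D ⁅x, y⁆ ω =
      postcomp (curvature D x y) ω := by
  induction k with
  | zero => simp only [lieDeriv_zero_form]; rfl
  | succ k ih =>
    refine ext_interior fun z ↦ ?_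
    have jacobi : interior ⁅x, ⁅y, z⁆⁆ ω = interior ⁅⁅x, y⁆, z⁆ ω + interior ⁅y, ⁅x, z⁆⁆ ω := by
      rw [leibniz_lie, interior_add]
    simp only [map_sub, interior_lieDeriv, interior_postcomp, ← ih, jacobi]
    abel

theorem braTuple_cons_zero_succ (x : L) (η : Fin (k + 1) → L) (j : Fin (k + 1)) :
    braTuple (Fin.cons x η : Fin (k + 2) → L) 0 j.succ = Fin.cons ⁅x, η j⁆ (j.removeNth η) := by
  ext m
  cases m using Fin.cases with
  | zero => simp [braTuple]
  | succ m =>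
    rw [Fin.cons_succ, Fin.removeNth_apply, ← Fin.cons_succ (α := fun _ ↦ L) x η]
    simp only [braTuple, Fin.val_succ, Nat.succ_ne_zero, if_false]
    congr 1
    ext
    by_cases hm : (m : ℕ) < j <;> simp [Fin.succAbove, Fin.lt_def, hm]

theorem braTuple_cons_succ_succ (x : L) (η : Fin (k + 2) → L) {i j : Fin (k + 2)} (hij : i < j) :
    braTuple (Fin.cons x η : Fin (k + 3) → L) i.succ j.succ =
      Fin.cons ⁅η i, η j⁆ (Fin.cons x (Fin.tail (braTuple η i j))) := by
  ext m
  cases m using Fin.cases with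
  | zero => simp [braTuple]
  | succ m =>
    cases m using Fin.cases with
    | zero => simp [braTuple]
    | succ m =>
      simp only [braTuple, Fin.cons_succ, Fin.tail, Fin.val_succ, Nat.succ_ne_zero, if_false]
      rw [← Fin.cons_succ (α := fun _ ↦ L) x η]
      congr 1
      ext
      simp only [Fin.val_succ]
      split_ifs <;> omega

theorem cons_lie_tail_braTuple (η : Fin (k + 2) → L) (i j : Fin (k + 2)) :
    Fin.cons ⁅η i, η j⁆ (Fin.tail (braTuple η i j)) = braTuple η i j :=
  Fin.cons_self_tail (braTuple η i j)

/-- The part of the covariant exterior derivative that involves brackets. -/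
def bracketSum (ω : (Fin k → L) → M) (ξ : Fin (k + 1) → L) : M :=
  ∑ i : Fin (k + 1), ∑ j : Fin (k + 1),
    if i < j then (-1 : ℤ) ^ ((i : ℕ) + (j : ℕ)) • ω (braTuple ξ i j) else 0

theorem apply_braTuple_cons_succ_succ (x : L) (η : Fin (k + 1) → L) {i j : Fin (k + 1)}
    (hij : i < j) (ω : L [⋀^Fin (k + 1)]→ₗ[S] M) :
    ω (braTuple (Fin.cons x η : Fin (k + 2) → L) i.succ j.succ) =
      -interior x ω (braTuple η i j) := by
  cases k with
  | zero => exact absurd hij (by omega)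
  | succ k =>
    rw [braTuple_cons_succ_succ x η hij, ← cons_lie_tail_braTuple η, ← interior_apply,
      ← interior_apply, interior_comm]
    rfl

theorem bracketSum_cons (x : L) (η : Fin (k + 1) → L) (ω : L [⋀^Fin (k + 1)]→ₗ[S] M) :
    bracketSum ω (Fin.cons x η : Fin (k + 2) → L) =
      -substDeriv (LieAlgebra.ad S L x) ω η - bracketSum (interior x ω) η := by
  have first_row (j : Fin (k + 1)) : (-1 : ℤ) ^ ((j : ℕ) + 1) •
        ω (braTuple (Fin.cons x η : Fin (k + 2) → L) 0 j.succ) =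
      -((-1 : ℤ) ^ (j : ℕ) • interior ⁅x, η j⁆ ω (j.removeNth η)) := by
    rw [braTuple_cons_zero_succ, pow_succ, mul_neg_one, neg_smul, interior_apply]
  have other_rows (i j : Fin (k + 1)) :
      (if i < j then (-1 : ℤ) ^ ((i : ℕ) + 1 + ((j : ℕ) + 1)) •
        ω (braTuple (Fin.cons x η : Fin (k + 2) → L) i.succ j.succ) else 0) =
      -if i < j then (-1 : ℤ) ^ ((i : ℕ) + (j : ℕ)) • interior x ω (braTuple η i j) else 0 := by
    split_ifs with hij
    · rw [apply_braTuple_cons_succ_succ x η hij, smul_neg, add_add_add_comm, pow_add,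
        one_add_one_eq_two, neg_one_sq, mul_one]
    · exact neg_zero.symm
  have substDeriv_eq : substDeriv (LieAlgebra.ad S L x) ω η =
      ∑ j : Fin (k + 1), (-1 : ℤ) ^ (j : ℕ) • interior ⁅x, η j⁆ ω (j.removeNth η) :=
    alternatizeUncurryFin_apply (ω.curryLeft ∘ₗ (LieAlgebra.ad S L x : L →ₗ[S] L)) η
  simp only [bracketSum, Fin.sum_univ_succ (n := k + 1), Fin.not_lt_zero, Fin.succ_pos,
    Fin.succ_lt_succ_iff, if_true, if_false, zero_add, Fin.val_zero, Fin.val_succ, first_row,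
    other_rows, substDeriv_eq, Finset.sum_neg_distrib, sub_eq_add_neg]

/-- The first-order part `x ↦ D x ∘ ω` of the covariant exterior derivative, before
alternation. -/
def derivForm : (L [⋀^Fin k]→ₗ[S] M) →ₗ[S] L →ₗ[S] L [⋀^Fin k]→ₗ[S] M :=
  (postcomp ∘ₗ D).flip

theorem derivForm_apply (ω : L [⋀^Fin k]→ₗ[S] M) (x : L) :
    derivForm D ω x = postcomp (D x) ω := rfl

theorem covDRaw_eq_add_bracketSum (ω : L [⋀^Fin k]→ₗ[S] M) (ξ : Fin (k + 1) → L) :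
    covDRaw (fun x ↦ D x) ω ξ =
      alternatizeUncurryFin (derivForm D ω) ξ + bracketSum ω ξ := by
  rw [alternatizeUncurryFin_apply]
  rfl

theorem covDRaw_cons (x : L) (η : Fin (k + 1) → L) (ω : L [⋀^Fin (k + 1)]→ₗ[S] M) :
    covDRaw (fun x ↦ D x) ω (Fin.cons x η : Fin (k + 2) → L) =
      lieDeriv D x ω η - covDRaw (fun x ↦ D x) (interior x ω) η := by
  have hinterior : interior x ∘ₗ derivForm D ω = derivForm D (interior x ω) := rfl
  rw [covDRaw_eq_add_bracketSum, bracketSum_cons, ← interior_apply,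
    interior_alternatizeUncurryFin, derivForm_apply, hinterior, covDRaw_eq_add_bracketSum,
    lieDeriv_apply, AlternatingMap.sub_apply, AlternatingMap.sub_apply]
  abel

theorem covDRaw_zero_form (ω : L [⋀^Fin 0]→ₗ[S] M) :
    covDRaw (fun x ↦ D x) ω = alternatizeUncurryFin (derivForm D ω) := by
  ext ξ
  rw [covDRaw_eq_add_bracketSum, bracketSum]
  simp

theorem covDRaw_cons_interior_self (x : L) (η : Fin k → L) (ω : L [⋀^Fin (k + 1)]→ₗ[S] M) :
    covDRaw (fun x ↦ D x) (interior x ω) (Fin.cons x η : Fin (k + 1) → L) =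
      lieDeriv D x (interior x ω) η := by
  cases k with
  | zero =>
    rw [covDRaw_zero_form, ← interior_apply, interior_alternatizeUncurryFin_zero,
      derivForm_apply, lieDeriv_zero_form]
  | succ k =>
    have hzero : covDRaw (fun x ↦ D x) (interior x (interior x ω)) η = 0 := by
      simp [interior_self, covDRaw]
    rw [covDRaw_cons, hzero, sub_zero]

theorem covDRaw_add (ω ω' : (Fin k → L) → M) :
    covDRaw (fun x ↦ D x) (ω + ω') = covDRaw (fun x ↦ D x) ω + covDRaw (fun x ↦ D x) ω' := by
  ext ξ
  simp only [covDRaw, Pi.add_apply, map_add, smul_add, ite_add_zero, Finset.sum_add_distrib]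
  abel

theorem covDRaw_smul (c : S) (ω : (Fin k → L) → M) :
    covDRaw (fun x ↦ D x) (c • ω) = c • covDRaw (fun x ↦ D x) ω := by
  ext ξ
  simp only [covDRaw, Pi.smul_apply, map_smul, smul_comm _ c, smul_add, Finset.smul_sum, smul_ite,
    smul_zero]

theorem exists_coe_eq_covDRaw_succ (d : (L [⋀^Fin k]→ₗ[S] M) →ₗ[S] L [⋀^Fin (k + 1)]→ₗ[S] M)
    (hd : ∀ ω, ⇑(d ω) = covDRaw (fun x ↦ D x) ω) (ω : L [⋀^Fin (k + 1)]→ₗ[S] M) :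
    ∃ dω : L [⋀^Fin (k + 2)]→ₗ[S] M, ⇑dω = covDRaw (fun x ↦ D x) ω := by
  have interior_d (x : L) : interior x (d (interior x ω)) = lieDeriv D x (interior x ω) := by
    ext η
    rw [interior_apply, hd, covDRaw_cons_interior_self]
  have interior_cartan (x : L) : interior x (lieDeriv D x ω - d (interior x ω)) = 0 := by
    rw [map_sub, interior_lieDeriv, interior_d, lie_self, sub_right_comm, sub_self, zero_sub]
    exact neg_eq_zero.mpr ω.curryLeft.map_zero
  obtain ⟨dω, hdω⟩ :=
    exists_curryLeft_eq ((lieDeriv D).flip ω - d ∘ₗ ω.curryLeft) interior_cartan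
  refine ⟨dω, funext fun ξ ↦ ?_⟩
  rw [← Fin.cons_self_tail ξ, covDRaw_cons, ← hd, ← AlternatingMap.sub_apply]
  exact congrArg (fun g ↦ g (ξ 0) (Fin.tail ξ)) hdω

theorem exists_covD (k : ℕ) : ∃ d : (L [⋀^Fin k]→ₗ[S] M) →ₗ[S] L [⋀^Fin (k + 1)]→ₗ[S] M,
    ∀ ω, ⇑(d ω) = covDRaw (fun x ↦ D x) ω := by
  induction k with
  | zero =>
    exact ⟨alternatizeUncurryFinLM ∘ₗ derivForm D, fun ω ↦ (covDRaw_zero_form D ω).symm⟩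
  | succ k ih =>
    obtain ⟨d, hd⟩ := ih
    choose d' hd' using exists_coe_eq_covDRaw_succ D d hd
    have map_add (ω ω' : L [⋀^Fin (k + 1)]→ₗ[S] M) : d' (ω + ω') = d' ω + d' ω' :=
      DFunLike.coe_injective <| (hd' _).trans <|
        (covDRaw_add D ω ω').trans (congrArg₂ (· + ·) (hd' ω) (hd' ω')).symm
    have map_smul (c : S) (ω : L [⋀^Fin (k + 1)]→ₗ[S] M) : d' (c • ω) = c • d' ω :=
      DFunLike.coe_injective <| (hd' _).trans <|
        (covDRaw_smul D c ω).trans (congrArg (c • ·) (hd' ω)).symm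
    exact ⟨⟨⟨d', map_add⟩, map_smul⟩, hd'⟩

/-- The covariant exterior derivative of `D` on alternating maps; `exists_covD` says that the
explicit formula `covDRaw` preserves alternating maps. -/
def covD : (L [⋀^Fin k]→ₗ[S] M) →ₗ[S] L [⋀^Fin (k + 1)]→ₗ[S] M :=
  (exists_covD D k).choose

theorem coe_covD (ω : L [⋀^Fin k]→ₗ[S] M) : ⇑(covD D ω) = covDRaw (fun x ↦ D x) ω :=
  (exists_covD D k).choose_spec ω

theorem interior_covD_zero (x : L) (ω : L [⋀^Fin 0]→ₗ[S] M) :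
    interior x (covD D ω) = lieDeriv D x ω := by
  have hcovD : covD D ω = alternatizeUncurryFin (derivForm D ω) :=
    DFunLike.coe_injective ((coe_covD D ω).trans (covDRaw_zero_form D ω))
  rw [hcovD, interior_alternatizeUncurryFin_zero, derivForm_apply, lieDeriv_zero_form]

theorem interior_covD (x : L) (ω : L [⋀^Fin (k + 1)]→ₗ[S] M) :
    interior x (covD D ω) = lieDeriv D x ω - covD D (interior x ω) := by
  ext η
  rw [interior_apply, coe_covD, covDRaw_cons, AlternatingMap.sub_apply, coe_covD]

/-- The curvature acting on the values of a form, `x ↦ y ↦ curvature D x y ∘ ω`. -/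
def curvatureForm (ω : L [⋀^Fin k]→ₗ[S] M) : L →ₗ[S] L →ₗ[S] L [⋀^Fin k]→ₗ[S] M :=
  (curvature D).compr₂ (postcomp.flip ω)

theorem curvatureForm_apply (ω : L [⋀^Fin k]→ₗ[S] M) (x y : L) :
    curvatureForm D ω x y = postcomp (curvature D x y) ω := rfl

theorem interior_comp_curvatureForm (ω : L [⋀^Fin (k + 1)]→ₗ[S] M) (x y : L) :
    interior x ∘ₗ curvatureForm D ω y = curvatureForm D (interior x ω) y := rfl

theorem lieDeriv_covD (x : L) (ω : L [⋀^Fin k]→ₗ[S] M) :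
    lieDeriv D x (covD D ω) =
      covD D (lieDeriv D x ω) + alternatizeUncurryFin (curvatureForm D ω x) := by
  induction k with
  | zero =>
    refine ext_interior fun y ↦ ?_
    rw [interior_lieDeriv, map_add, interior_alternatizeUncurryFin_zero, interior_covD_zero,
      interior_covD_zero, interior_covD_zero, curvatureForm_apply, ← lieDeriv_commutator]
    abel
  | succ k ih =>
    refine ext_interior fun y ↦ ?_
    rw [interior_lieDeriv, map_add, interior_alternatizeUncurryFin, interior_covD, interior_covD,
      interior_covD, curvatureForm_apply, ← lieDeriv_commutator, interior_comp_curvatureForm,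
      map_sub, ih, interior_lieDeriv, map_sub]
    abel

theorem interior_covD_covD_zero (x : L) (ω : L [⋀^Fin 0]→ₗ[S] M) :
    interior x (covD D (covD D ω)) = alternatizeUncurryFin (curvatureForm D ω x) := by
  rw [interior_covD, interior_covD_zero, lieDeriv_covD, add_sub_cancel_left]

theorem interior_covD_covD (x : L) (ω : L [⋀^Fin (k + 1)]→ₗ[S] M) :
    interior x (covD D (covD D ω)) =
      alternatizeUncurryFin (curvatureForm D ω x) + covD D (covD D (interior x ω)) := by
  rw [interior_covD, interior_covD, lieDeriv_covD, map_sub]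
  abel

theorem curvatureForm_flip (ω : L [⋀^Fin k]→ₗ[S] M) (x : L) :
    (curvatureForm D ω).flip x = -curvatureForm D ω x := by
  ext y : 1
  rw [LinearMap.flip_apply, LinearMap.neg_apply, curvatureForm_apply, curvatureForm_apply,
    curvature_swap, map_neg, LinearMap.neg_apply]

theorem alternatizeUncurryFin₂_curvatureForm (ω : L [⋀^Fin k]→ₗ[S] M) :
    alternatizeUncurryFin (alternatizeUncurryFinLM ∘ₗ curvatureForm D ω) =
      2 • covD D (covD D ω) := by
  induction k with
  | zero =>
    refine ext_interior fun x ↦ ?_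
    rw [interior_alternatizeUncurryFin₂_zero, curvatureForm_flip, sub_neg_eq_add,
      alternatizeUncurryFin_add, map_nsmul, interior_covD_covD_zero, two_nsmul]
  | succ k ih =>
    refine ext_interior fun x ↦ ?_
    have hinterior : (curvatureForm D ω).compr₂ (interior x) = curvatureForm D (interior x ω) := rfl
    rw [interior_alternatizeUncurryFin₂, curvatureForm_flip, sub_neg_eq_add,
      alternatizeUncurryFin_add, hinterior, ih, map_nsmul, interior_covD_covD, nsmul_add,
      two_nsmul (alternatizeUncurryFin _)]

end CartanCalculus

section Permutations

variable {n : ℕ}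

/-- The permutation `(i, τ 0, …, τ (n - 1))` of `Fin (n + 1)`, where `τ` permutes the
complement of `i` identified with `Fin n` through `i.succAbove`. -/
def permCons (p : Fin (n + 1) × Equiv.Perm (Fin n)) : Equiv.Perm (Fin (n + 1)) :=
  p.1.cycleRange.symm * Equiv.Perm.decomposeFin.symm (0, p.2)

theorem coe_permCons (p : Fin (n + 1) × Equiv.Perm (Fin n)) :
    ⇑(permCons p) = Fin.cons p.1 (p.1.succAbove ∘ p.2) := by
  ext m
  cases m using Fin.cases <;> simp [permCons]

theorem sign_permCons (p : Fin (n + 1) × Equiv.Perm (Fin n)) :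
    (permCons p).sign = (-1) ^ (p.1 : ℕ) * p.2.sign := by
  simp [permCons]

theorem permCons_bijective : Bijective (permCons (n := n)) := by
  rw [Fintype.bijective_iff_injective_and_card]
  refine ⟨fun ⟨i, τ⟩ ⟨i', τ'⟩ h ↦ ?_, by simp [Fintype.card_perm, Nat.factorial_succ]⟩
  have hcoe := congrArg DFunLike.coe h
  rw [coe_permCons, coe_permCons] at hcoe
  obtain ⟨rfl : i = i', hτ⟩ := Fin.cons_injective2 hcoe
  exact congrArg (Prod.mk i) (Equiv.ext fun m ↦ i.succAbove_right_injective (congrFun hτ m))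

theorem sum_perm_sign_smul_fin_succ {A V : Type*} [AddCommGroup A] (F : (Fin (n + 1) → V) → A)
    (ξ : Fin (n + 1) → V) :
    ∑ σ : Equiv.Perm (Fin (n + 1)), (σ.sign : ℤ) • F (ξ ∘ σ) =
      ∑ i : Fin (n + 1), (-1 : ℤ) ^ (i : ℕ) • ∑ τ : Equiv.Perm (Fin n),
        (τ.sign : ℤ) • F (Fin.cons (ξ i) (i.removeNth ξ ∘ τ)) := by
  have comp_permCons (i : Fin (n + 1)) (τ : Equiv.Perm (Fin n)) :
      ξ ∘ permCons (i, τ) = Fin.cons (ξ i) (i.removeNth ξ ∘ τ) := by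
    rw [coe_permCons]
    ext m
    cases m using Fin.cases <;> rfl
  rw [← permCons_bijective.sum_comp, Fintype.sum_prod_type]
  simp only [Finset.smul_sum, smul_smul, sign_permCons, comp_permCons, Units.val_mul,
    Units.val_pow_eq_pow_val, Units.val_neg, Units.val_one]

variable {S V W : Type*} [CommRing S] [AddCommGroup V] [Module S V] [AddCommGroup W] [Module S W]
  {k : ℕ}

theorem sum_perm_sign_smul_apply (ω : V [⋀^Fin k]→ₗ[S] W) (η : Fin k → V) :
    ∑ τ : Equiv.Perm (Fin k), (τ.sign : ℤ) • ω (η ∘ τ) = k.factorial • ω η := by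
  have sign_smul (τ : Equiv.Perm (Fin k)) : (τ.sign : ℤ) • ω (η ∘ τ) = ω η := by
    rw [map_perm, Units.smul_def, smul_smul, ← Units.val_mul, Int.units_mul_self, Units.val_one,
      one_smul]
  simp [sign_smul, Fintype.card_perm]

theorem sum_perm_sign_smul_eq_alternatizeUncurryFin (f : V →ₗ[S] V [⋀^Fin k]→ₗ[S] W)
    (ξ : Fin (k + 1) → V) :
    ∑ σ : Equiv.Perm (Fin (k + 1)), (σ.sign : ℤ) • f (ξ (σ 0)) (Fin.tail (ξ ∘ σ)) =
      k.factorial • alternatizeUncurryFin f ξ := by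
  rw [alternatizeUncurryFin_apply, Finset.smul_sum]
  refine (sum_perm_sign_smul_fin_succ (fun η ↦ f (η 0) (Fin.tail η)) ξ).trans ?_
  refine Finset.sum_congr rfl fun i _ ↦ ?_
  simp only [Fin.cons_zero, Fin.tail_cons]
  rw [sum_perm_sign_smul_apply, smul_comm]

theorem sum_perm_sign_smul_eq_alternatizeUncurryFin₂ (f : V →ₗ[S] V →ₗ[S] V [⋀^Fin k]→ₗ[S] W)
    (ξ : Fin (k + 2) → V) :
    ∑ σ : Equiv.Perm (Fin (k + 2)), (σ.sign : ℤ) •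
        f (ξ (σ 0)) (ξ (σ 1)) (fun i ↦ ξ (σ (i.addNat 2))) =
      k.factorial • alternatizeUncurryFin (alternatizeUncurryFinLM ∘ₗ f) ξ := by
  rw [alternatizeUncurryFin_apply, Finset.smul_sum]
  refine (sum_perm_sign_smul_fin_succ (fun η ↦ f (η 0) (η 1) fun i ↦ η (i.addNat 2)) ξ).trans ?_
  refine Finset.sum_congr rfl fun i _ ↦ ?_
  rw [smul_comm]
  exact congrArg _ (sum_perm_sign_smul_eq_alternatizeUncurryFin (f (ξ i)) (i.removeNth ξ))

end Permutations

section Curvature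

variable {S L M : Type*} [CommRing S] [LieRing L] [LieAlgebra S L] [AddCommGroup M] [Module S M]
  (D : L →ₗ[S] Module.End S M) {k : ℕ}

theorem covDRaw_covDRaw (ω : L [⋀^Fin k]→ₗ[S] M) :
    covDRaw (fun x ↦ D x) (covDRaw (fun x ↦ D x) ω) = covD D (covD D ω) := by
  rw [coe_covD, coe_covD]

theorem covDRaw_covDRaw_eq_muRaw (K : Type*) [Field K] [CharZero K] [Module K M]
    (ω : L [⋀^Fin k]→ₗ[S] M) :
    covDRaw (fun x ↦ D x) (covDRaw (fun x ↦ D x) ω) = muRaw K (curvRaw fun x ↦ D x) ω := by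
  ext ξ
  have sum_perm : ∑ σ : Equiv.Perm (Fin (k + 2)), (σ.sign : ℤ) •
      curvRaw (fun x ↦ D x) (ξ (σ 0)) (ξ (σ 1)) (ω fun i ↦ ξ (σ (i.addNat 2))) =
        (Nat.factorial 2 * k.factorial) • covD D (covD D ω) ξ := by
    rw [mul_comm, mul_smul, Nat.factorial_two, ← AlternatingMap.smul_apply,
      ← alternatizeUncurryFin₂_curvatureForm, ← sum_perm_sign_smul_eq_alternatizeUncurryFin₂]
    rfl
  have factorial_ne_zero : ((Nat.factorial 2 * k.factorial : ℕ) : K) ≠ 0 :=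
    Nat.cast_ne_zero.mpr (mul_ne_zero (Nat.factorial_ne_zero 2) k.factorial_ne_zero)
  rw [covDRaw_covDRaw, muRaw, sum_perm, ← Nat.cast_smul_eq_nsmul K,
    inv_smul_smul₀ factorial_ne_zero]

theorem covDRaw_covDRaw_zero_form (s : M) (x y : L) :
    covDRaw (fun x ↦ D x) (covDRaw (fun x ↦ D x) fun _ : Fin 0 → L ↦ s) ![x, y] =
      curvRaw (fun x ↦ D x) x y s := by
  calc covDRaw (fun x ↦ D x) (covDRaw (fun x ↦ D x) fun _ : Fin 0 → L ↦ s) ![x, y]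
      = interior x (covD D (covD D (constOfIsEmpty S L (Fin 0) s))) ![y] :=
        congrFun (covDRaw_covDRaw D (constOfIsEmpty S L (Fin 0) s)) ![x, y]
    _ = curvRaw (fun x ↦ D x) x y s := by
        rw [interior_covD_covD_zero]
        exact congrArg (fun ω ↦ ω ![])
          (interior_alternatizeUncurryFin_zero (curvatureForm D (constOfIsEmpty S L _ s) x) y)

end Curvature

/-- A connection that is only known to be biadditive, as a `ℤ`-linear map into endomorphisms. -/
def ofBiadditive {L M : Type*} [LieRing L] [AddCommGroup M] (D : L → M → M)
    (add_left : ∀ x y m, D (x + y) m = D x m + D y m)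
    (add_right : ∀ x m n, D x (m + n) = D x m + D x n) : L →ₗ[ℤ] Module.End ℤ M :=
  LinearMap.mk₂ ℤ D add_left
    (fun c x m ↦ map_zsmul (AddMonoidHom.mk' (D · m) fun x y ↦ add_left x y m) c x) add_right
    (fun c x m ↦ map_zsmul (AddMonoidHom.mk' (D x) (add_right x)) c m)

/-- Restriction of scalars for alternating maps. -/
def restrictScalars (S : Type*) {R V W : Type*} [Semiring S] [Semiring R] [SMul S R]
    [AddCommMonoid V] [Module S V] [Module R V] [IsScalarTower S R V]
    [AddCommMonoid W] [Module S W] [Module R W] [IsScalarTower S R W]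
    {k : ℕ} (ω : V [⋀^Fin k]→ₗ[R] W) : V [⋀^Fin k]→ₗ[S] W :=
  { ω.toMultilinearMap.restrictScalars S with map_eq_zero_of_eq' := ω.map_eq_zero_of_eq' }

end LieConnection

open LieConnection in
theorem lieRinehart_covariant_derivative_squared_eq_curvature_general
    {K R L M : Type*} [Field K] [CharZero K] [Ring R] [LieRing L] [Module R L]
    [AddCommGroup M] [Module R M] [Module K M] (D : L → M → M)
    (add_left : ∀ x y m, D (x + y) m = D x m + D y m)
    (add_right : ∀ x m n, D x (m + n) = D x m + D x n) :
    (∀ (k : ℕ) (ω : AlternatingMap R L M (Fin k)) (ξ : Fin (k + 2) → L),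
        covDRaw D (covDRaw D ⇑ω) ξ = muRaw K (curvRaw D) ⇑ω ξ)
      ∧ (∀ (s : M) (x y : L),
          covDRaw D (covDRaw D (fun _ : Fin 0 → L => s)) ![x, y] = curvRaw D x y s)
      ∧ ((∀ (k : ℕ) (ω : AlternatingMap R L M (Fin k)) (ξ : Fin (k + 2) → L),
            covDRaw D (covDRaw D ⇑ω) ξ = 0)
          ↔ ∀ (x y : L) (m : M), curvRaw D x y m = 0) := by
  have squared_eq_muRaw (k : ℕ) (ω : L [⋀^Fin k]→ₗ[R] M) (ξ : Fin (k + 2) → L) :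
      covDRaw D (covDRaw D ω) ξ = muRaw K (curvRaw D) ω ξ :=
    congrFun (covDRaw_covDRaw_eq_muRaw (ofBiadditive D add_left add_right) K
      (restrictScalars ℤ ω)) ξ
  have squared_zero_form := covDRaw_covDRaw_zero_form (ofBiadditive D add_left add_right)
  refine ⟨squared_eq_muRaw, squared_zero_form, fun hsq x y m ↦ ?_, fun flat k ω ξ ↦ ?_⟩
  · exact (squared_zero_form m x y).symm.trans
      (hsq 0 (AlternatingMap.constOfIsEmpty R L (Fin 0) m) ![x, y])
  · simp [squared_eq_muRaw, muRaw, flat]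

/-- For an `L`-connection `∇` on `M`: `(d^∇ ∘ d^∇) ω = μ(R^∇) ω` for every `M`-valued
`k`-form `ω`; in particular `(d^∇(d^∇ s))(ξ, η) = R^∇(ξ, η) s` for `s ∈ M`; and
`d^∇ ∘ d^∇ = 0` on all `M`-valued forms if and only if `∇` is flat (`R^∇ = 0`). -/
theorem lieRinehart_covariant_derivative_squared_eq_curvature
    {K R L M : Type*} [Field K] [CharZero K] [CommRing R] [Algebra K R]
    [LieRing L] [Module R L] [Module K L] [IsScalarTower K R L] [LieAlgebra K L]
    [AddCommGroup M] [Module R M] [Module K M] [IsScalarTower K R M]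
    (a : L →ₗ[R] Derivation K R R) (ha : IsLieRinehart a)
    (D : L → M → M) (hD : IsConnection a D) :
    (∀ (k : ℕ) (ω : AlternatingMap R L M (Fin k)) (ξ : Fin (k + 2) → L),
        covDRaw D (covDRaw D ⇑ω) ξ = muRaw K (curvRaw D) ⇑ω ξ)
      ∧ (∀ (s : M) (x y : L),
          covDRaw D (covDRaw D (fun _ : Fin 0 → L => s)) ![x, y] = curvRaw D x y s)
      ∧ ((∀ (k : ℕ) (ω : AlternatingMap R L M (Fin k)) (ξ : Fin (k + 2) → L),
            covDRaw D (covDRaw D ⇑ω) ξ = 0)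
          ↔ ∀ (x y : L) (m : M), curvRaw D x y m = 0) :=
  lieRinehart_covariant_derivative_squared_eq_curvature_general D hD.add_left hD.add_right
end
end

section
/- Let X be a topological space and let A be a finite-dimensional ℝ-subalgebra (a linear subspace closed under pointwise multiplication, not required to contain the constant function 1) of the algebra of continuous functions X → ℝ. Then every f ∈ A is locally constant. -/
/-!
Adjoining a unit to `A` keeps it finitely generated as a module, so each `f ∈ A` is annihilated by
a monic polynomial. All values of `f` are roots of that polynomial, hence finite in number, and a
finite subspace of a T₁ space is discrete.
-/

theorem isIntegral_of_mem_nonUnitalSubalgebra {R B : Type*} [CommRing R] [Ring B] [Algebra R B]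
    (A : NonUnitalSubalgebra R B) [Module.Finite R A] {x : B} (hx : x ∈ A) : IsIntegral R x := by
  have : Module.Finite R (Unitization R A) := .equiv (Unitization.linearEquiv R R A).symm
  have integral_inr : IsIntegral R (Unitization.inr ⟨x, hx⟩ : Unitization R A) := .of_finite R _
  simpa using integral_inr.map (NonUnitalSubalgebra.unitization A)

theorem finite_range_of_isIntegral {R S X : Type*} [CommRing R] [CommRing S] [IsDomain S]
    [Algebra R S] {f : X → S} (hf : IsIntegral R f) : (Set.range f).Finite := by
  obtain ⟨p, p_monic, hp⟩ := hf
  refine (p.rootSet_finite S).subset ?_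
  rintro _ ⟨x, rfl⟩
  rw [p_monic.mem_rootSet, ← Polynomial.aeval_pi_apply₂]
  exact congrFun hp x

theorem isLocallyConstant_of_continuous_of_finite_range {X Y : Type*} [TopologicalSpace X]
    [TopologicalSpace Y] [T1Space Y] {f : X → Y} (hf : Continuous f) (hfin : (Set.range f).Finite) :
    IsLocallyConstant f := by
  have : Finite (Set.range f) := hfin
  have continuous_factor : Continuous (Set.rangeFactorization f) := hf.subtype_mk _
  exact ((IsLocallyConstant.iff_continuous _).2 continuous_factor).comp Subtype.val

theorem locallyConstant_of_mem_finiteDimensional_subalgebra_general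
    {R S X : Type*} [CommRing R] [CommRing S] [IsDomain S] [Algebra R S]
    [TopologicalSpace S] [IsTopologicalRing S] [T1Space S] [TopologicalSpace X]
    (A : NonUnitalSubalgebra R C(X, S)) [Module.Finite R A] {f : C(X, S)} (hf : f ∈ A) :
    IsLocallyConstant f := by
  have integral_f : IsIntegral R (f : X → S) :=
    (isIntegral_of_mem_nonUnitalSubalgebra A hf).map (ContinuousMap.coeFnAlgHom R)
  exact isLocallyConstant_of_continuous_of_finite_range f.continuous
    (finite_range_of_isIntegral integral_f)

/-- Let `X` be a topological space and `A` a finite-dimensional `ℝ`-subalgebra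
(a linear subspace closed under pointwise multiplication, not required to contain the
constant function `1`) of the algebra of continuous functions `X → ℝ`. Then every
`f ∈ A` is locally constant. -/
theorem locallyConstant_of_mem_finiteDimensional_subalgebra
    {X : Type*} [TopologicalSpace X] (A : Submodule ℝ C(X, ℝ))
    (hmul : ∀ f ∈ A, ∀ g ∈ A, f * g ∈ A) (hfd : FiniteDimensional ℝ A) :
    ∀ f ∈ A, IsLocallyConstant (⇑f) := by
  let B : NonUnitalSubalgebra ℝ C(X, ℝ) := A.toNonUnitalSubalgebra fun f g hf hg => hmul f hf g hg
  have : Module.Finite ℝ B := hfd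
  exact fun _ hf => locallyConstant_of_mem_finiteDimensional_subalgebra_general B hf
end
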